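/- arXiv:1702.00779 — 3 statements merged into one kernel-verified Lean document; each statement's English description precedes it below -/
import Mathlib

section
/- Let k be any field and R = k[t,u,x,y]/(xy − tu − 1) the coordinate ring of SL₂. For λ ∈ k*, let ρ_λ* : R → k[s,t] be the k-algebra homomorphism induced by t ↦ t, u ↦ λs, x ↦ 1, y ↦ 1 + λst (the comorphism of ρ_λ : 𝔸² ↪ SL₂, (s,t) ↦ ((1,t),(λs,1+λst))). Then: (a) for every surjective k-algebra homomorphism σ : R → k[s,t] with ker σ = ker ρ₁* (i.e., every closed embedding 𝔸² ↪ SL₂ with image equal to ρ₁(𝔸²)), there exist λ ∈ k* and a k-algebra automorphism Φ of R with σ = ρ_λ* ∘ Φ; (b) for λ, λ' ∈ k*, there exists a k-algebra automorphism Φ of R with ρ_{λ'}* = ρ_λ* ∘ Φ if and only if λ' = λ or λ' = −λ. -/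
open MvPolynomial

noncomputable section

variable (k : Type*) [Field k]

/-- The polynomial `x*y - t*u - 1` defining `SL₂` inside `𝔸⁴ = Spec k[t,u,x,y]`
(variables: `0 = t`, `1 = u`, `2 = x`, `3 = y`). -/
def sl2Rel : MvPolynomial (Fin 4) k := X 2 * X 3 - X 0 * X 1 - 1

/-- The coordinate ring `R = k[t,u,x,y]/(xy - tu - 1)` of `SL₂`. -/
abbrev SL2Ring : Type _ := MvPolynomial (Fin 4) k ⧸ Ideal.span {sl2Rel k}

/-- The comorphism of the embedding `ρ_λ : 𝔸² ↪ SL₂`, `(s,t) ↦ ((1,t),(λs,1+λst))`, on the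
level of the ambient polynomial ring: `t ↦ t`, `u ↦ λs`, `x ↦ 1`, `y ↦ 1 + λst`
(in `k[s,t]`, variables `0 = s`, `1 = t`). -/
def rhoLamAux (lam : k) : MvPolynomial (Fin 4) k →ₐ[k] MvPolynomial (Fin 2) k :=
  aeval ![X 1, C lam * X 0, 1, 1 + C lam * X 0 * X 1]

lemma rhoLamAux_rel (lam : k) : rhoLamAux k lam (sl2Rel k) = 0 := by
  simp [rhoLamAux, sl2Rel]
  ring

/-- The comorphism `ρ_λ* : R → k[s,t]` of the embedding `ρ_λ : 𝔸² ↪ SL₂`,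
`(s,t) ↦ ((1,t),(λs,1+λst))`; induced by `t ↦ t`, `u ↦ λs`, `x ↦ 1`, `y ↦ 1 + λst`. -/
def rhoLamStar (lam : k) : SL2Ring k →ₐ[k] MvPolynomial (Fin 2) k :=
  Ideal.Quotient.liftₐ _ (rhoLamAux k lam) (by
    intro a ha
    rw [Ideal.mem_span_singleton] at ha
    obtain ⟨c, rfl⟩ := ha
    rw [map_mul, rhoLamAux_rel]
    simp)



namespace SL2Emb

/-! ### Generators, lifting and extensionality for `R` -/

def rt : SL2Ring k := Ideal.Quotient.mk _ (X 0)
def ru : SL2Ring k := Ideal.Quotient.mk _ (X 1)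
def rx : SL2Ring k := Ideal.Quotient.mk _ (X 2)
def ry : SL2Ring k := Ideal.Quotient.mk _ (X 3)

lemma rel : rx k * ry k = rt k * ru k + 1 := by
  have h : Ideal.Quotient.mk (Ideal.span {sl2Rel k}) (sl2Rel k) = 0 :=
    Ideal.Quotient.eq_zero_iff_mem.2 (Ideal.subset_span rfl)
  unfold rx ry rt ru
  have e : sl2Rel k = X 2 * X 3 - X 0 * X 1 - 1 := rfl
  have h' := (congrArg (Ideal.Quotient.mk (Ideal.span {sl2Rel k})) e).symm.trans h
  simp only [map_sub, map_mul, map_one] at h'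
  linear_combination h'

variable {k}

section lift
variable {W : Type*} [CommRing W] [Algebra k W]

def rlift (a b c d : W) (h : c * d = a * b + 1) : SL2Ring k →ₐ[k] W :=
  Ideal.Quotient.liftₐ _ (aeval ![a, b, c, d]) (by
    intro z hz
    rw [Ideal.mem_span_singleton] at hz
    obtain ⟨q, rfl⟩ := hz
    have : aeval (R := k) ![a, b, c, d] (sl2Rel k) = 0 := by
      simp [sl2Rel]
      linear_combination h
    rw [map_mul, this, zero_mul])

variable (a b c d : W) (h : c * d = a * b + 1)

@[simp] lemma rlift_t : rlift (k := k) a b c d h (rt k) = a := by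
  have : rlift (k := k) a b c d h (rt k) = aeval ![a, b, c, d] (X 0 : MvPolynomial (Fin 4) k) := rfl
  simp [this]
@[simp] lemma rlift_u : rlift (k := k) a b c d h (ru k) = b := by
  have : rlift (k := k) a b c d h (ru k) = aeval ![a, b, c, d] (X 1 : MvPolynomial (Fin 4) k) := rfl
  simp [this]
@[simp] lemma rlift_x : rlift (k := k) a b c d h (rx k) = c := by
  have : rlift (k := k) a b c d h (rx k) = aeval ![a, b, c, d] (X 2 : MvPolynomial (Fin 4) k) := rfl
  simp [this]
@[simp] lemma rlift_y : rlift (k := k) a b c d h (ry k) = d := by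
  have : rlift (k := k) a b c d h (ry k) = aeval ![a, b, c, d] (X 3 : MvPolynomial (Fin 4) k) := rfl
  simp [this]

lemma rext {W : Type*} [Semiring W] [Algebra k W] {f g : SL2Ring k →ₐ[k] W}
    (ht : f (rt k) = g (rt k)) (hu : f (ru k) = g (ru k))
    (hx : f (rx k) = g (rx k)) (hy : f (ry k) = g (ry k)) : f = g := by
  apply Ideal.Quotient.algHom_ext
  apply MvPolynomial.algHom_ext
  intro i
  fin_cases i
  · exact ht
  · exact hu
  · exact hx
  · exact hy

end lift

lemma rho_t (l : k) : rhoLamStar k l (rt k) = X 1 := by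
  have : rhoLamStar k l (rt k) = rhoLamAux k l (X 0) := rfl
  simp [this, rhoLamAux]
lemma rho_u (l : k) : rhoLamStar k l (ru k) = C l * X 0 := by
  have : rhoLamStar k l (ru k) = rhoLamAux k l (X 1) := rfl
  simp [this, rhoLamAux]
lemma rho_x (l : k) : rhoLamStar k l (rx k) = 1 := by
  have : rhoLamStar k l (rx k) = rhoLamAux k l (X 2) := rfl
  simp [this, rhoLamAux]
lemma rho_y (l : k) : rhoLamStar k l (ry k) = 1 + C l * X 0 * X 1 := by
  have : rhoLamStar k l (ry k) = rhoLamAux k l (X 3) := rfl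
  simp [this, rhoLamAux]

/-- `x` is a non-zero-divisor. -/
lemma rx_cancel {r : SL2Ring k} (h : rx k * r = 0) : r = 0 := by
  obtain ⟨p, rfl⟩ := Ideal.Quotient.mk_surjective r
  unfold rx at h
  rw [← map_mul, Ideal.Quotient.eq_zero_iff_mem, Ideal.mem_span_singleton] at h
  obtain ⟨s, hs⟩ := h
  have hp : Prime (X 2 : MvPolynomial (Fin 4) k) := (MvPolynomial.X_prime)
  have hd : (X 2 : MvPolynomial (Fin 4) k) ∣ sl2Rel k * s := ⟨p, hs.symm⟩
  rcases hp.dvd_or_dvd hd with ⟨w, hw⟩ | ⟨w, hw⟩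
  · exfalso
    have := congrArg (MvPolynomial.eval (0 : Fin 4 → k)) hw
    simp [sl2Rel] at this
  · rw [Ideal.Quotient.eq_zero_iff_mem, Ideal.mem_span_singleton]
    refine ⟨w, ?_⟩
    apply mul_left_cancel₀ hp.ne_zero
    rw [hs, hw]; ring

lemma rx_cancel' {r s : SL2Ring k} (h : rx k * r = rx k * s) : r = s := by
  rw [← sub_eq_zero]
  apply rx_cancel
  rw [mul_sub, h, sub_self]

lemma rx_pow_cancel {r s : SL2Ring k} (n : ℕ) (h : rx k ^ n * r = rx k ^ n * s) : r = s := by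
  induction n with
  | zero => simpa using h
  | succ n ih =>
    apply ih
    apply rx_cancel'
    linear_combination h

/-! ### Chain rule -/

lemma chain {B : Type*} [CommRing B] (f : Fin 2 → MvPolynomial (Fin 2) B)
    (p : MvPolynomial (Fin 2) B) (i : Fin 2) :
    pderiv i (aeval f p) = aeval f (pderiv 0 p) * pderiv i (f 0)
      + aeval f (pderiv 1 p) * pderiv i (f 1) := by
  induction p using MvPolynomial.induction_on with
  | C a => simp [algebraMap_eq]
  | add p q hp hq => simp only [map_add, hp, hq]; ring
  | mul_X p j hp =>
    simp only [map_mul, Derivation.leibniz, hp, smul_eq_mul, aeval_X, map_add]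
    fin_cases j <;> simp [pderiv_X] <;> ring

/-- constant coefficient -/
abbrev cc (p : MvPolynomial (Fin 2) k) : k := constantCoeff p
/-- linear coefficients -/
abbrev dd (i : Fin 2) (p : MvPolynomial (Fin 2) k) : k := constantCoeff (pderiv i p)

lemma cc_hom (g : MvPolynomial (Fin 2) k →ₐ[k] MvPolynomial (Fin 2) k)
    (h : ∀ i, cc (g (X i)) = 0) (p) : cc (g p) = cc p := by
  induction p using MvPolynomial.induction_on with
  | C a =>
    have : g (C a) = C a := by rw [← algebraMap_eq]; exact g.commutes a
    rw [this]
  | add p q hp hq => simp only [map_add, cc] at *; rw [hp, hq]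
  | mul_X p j hp =>
    simp only [map_mul, cc] at *
    rw [h j]; simp

lemma dd_hom (g : MvPolynomial (Fin 2) k →ₐ[k] MvPolynomial (Fin 2) k)
    (h : ∀ i, cc (g (X i)) = 0) (p) (i : Fin 2) :
    dd i (g p) = dd 0 p * dd i (g (X 0)) + dd 1 p * dd i (g (X 1)) := by
  have hg : g = aeval (fun i => g (X i)) := by ext i; simp
  have e := fun q => cc_hom g h q
  have := chain (fun i => g (X i)) p i
  rw [← hg] at this
  simp only [dd, this, map_add, map_mul]
  simp only [cc] at e
  rw [e, e]

/-! ### The group of liftable automorphisms -/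

abbrev A (k : Type*) [Field k] := MvPolynomial (Fin 2) k

/-- `β` lifts to an automorphism of `R`. -/
def Lifts (β : A k ≃ₐ[k] A k) : Prop :=
  ∃ Φ : SL2Ring k ≃ₐ[k] SL2Ring k, ∀ r, β (rhoLamStar k 1 r) = rhoLamStar k 1 (Φ r)

lemma Lifts.mul {β γ : A k ≃ₐ[k] A k} (hβ : Lifts β) (hγ : Lifts γ) : Lifts (β * γ) := by
  obtain ⟨Φ, h⟩ := hβ
  obtain ⟨Ψ, h'⟩ := hγ
  exact ⟨Φ * Ψ, fun r => by simp [AlgEquiv.mul_apply, h, h']⟩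

lemma Lifts.inv {β : A k ≃ₐ[k] A k} (hβ : Lifts β) : Lifts β⁻¹ := by
  obtain ⟨Φ, h⟩ := hβ
  refine ⟨Φ⁻¹, fun r => ?_⟩
  apply β.injective
  rw [h, ← AlgEquiv.mul_apply, ← AlgEquiv.mul_apply]
  simp

lemma lifts_of {β : A k ≃ₐ[k] A k} (Φ : SL2Ring k ≃ₐ[k] SL2Ring k)
    (hx : Φ (rx k) = rx k) (ht : β (X 1) = rhoLamStar k 1 (Φ (rt k)))
    (hu : β (X 0) = rhoLamStar k 1 (Φ (ru k))) : Lifts β := by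
  refine ⟨Φ, ?_⟩
  have : (β : A k →ₐ[k] A k).comp (rhoLamStar k 1) = (rhoLamStar k 1).comp (Φ : SL2Ring k →ₐ[k] SL2Ring k) := by
    apply rext
    · simp [rho_t, ht]
    · simp [rho_u, hu]
    · simp [rho_x, hx]
    · have h := congrArg (fun r => rhoLamStar k 1 (Φ r)) (rel k)
      simp only [map_mul, map_add, map_one, hx, rho_x, one_mul, ← ht, ← hu] at h
      simp [rho_y, h]
      ring
  intro r
  exact congrArg (fun f => f r) this

def elem0 (e f : k) : A k ≃ₐ[k] A k :=
  AlgEquiv.ofAlgHom (aeval ![X 0 + C e * X 1 + C f, X 1]) (aeval ![X 0 - C e * X 1 - C f, X 1])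
    (by apply MvPolynomial.algHom_ext; intro i; fin_cases i <;> simp [algebraMap_eq] <;> ring)
    (by apply MvPolynomial.algHom_ext; intro i; fin_cases i <;> simp [algebraMap_eq] <;> ring)

def elem1 (e f : k) : A k ≃ₐ[k] A k :=
  AlgEquiv.ofAlgHom (aeval ![X 0, X 1 + C e * X 0 + C f]) (aeval ![X 0, X 1 - C e * X 0 - C f])
    (by apply MvPolynomial.algHom_ext; intro i; fin_cases i <;> simp [algebraMap_eq] <;> ring)
    (by apply MvPolynomial.algHom_ext; intro i; fin_cases i <;> simp [algebraMap_eq] <;> ring)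

def swapA : A k ≃ₐ[k] A k :=
  AlgEquiv.ofAlgHom (aeval ![X 1, X 0]) (aeval ![X 1, X 0])
    (by apply MvPolynomial.algHom_ext; intro i; fin_cases i <;> simp)
    (by apply MvPolynomial.algHom_ext; intro i; fin_cases i <;> simp)

def scaleA (l : k) (hl : l ≠ 0) : A k ≃ₐ[k] A k :=
  AlgEquiv.ofAlgHom (aeval ![C l * X 0, X 1]) (aeval ![C l⁻¹ * X 0, X 1])
    (by apply MvPolynomial.algHom_ext; intro i; fin_cases i <;> simp [algebraMap_eq, ← mul_assoc, ← C_mul, hl])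
    (by apply MvPolynomial.algHom_ext; intro i; fin_cases i <;> simp [algebraMap_eq, ← mul_assoc, ← C_mul, hl])

@[simp] lemma elem0_0 (e f : k) : elem0 e f (X 0) = X 0 + C e * X 1 + C f := by simp [elem0]
@[simp] lemma elem0_1 (e f : k) : elem0 e f (X 1) = X 1 := by simp [elem0]
@[simp] lemma elem1_0 (e f : k) : elem1 e f (X 0) = X 0 := by simp [elem1]
@[simp] lemma elem1_1 (e f : k) : elem1 e f (X 1) = X 1 + C e * X 0 + C f := by simp [elem1]
@[simp] lemma swapA_0 : swapA (k := k) (X 0) = X 1 := by simp [swapA]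
@[simp] lemma swapA_1 : swapA (k := k) (X 1) = X 0 := by simp [swapA]
@[simp] lemma scaleA_0 (l : k) (hl : l ≠ 0) : scaleA l hl (X 0) = C l * X 0 := by simp [scaleA]
@[simp] lemma scaleA_1 (l : k) (hl : l ≠ 0) : scaleA l hl (X 1) = X 1 := by simp [scaleA]

def swapR : SL2Ring k ≃ₐ[k] SL2Ring k :=
  AlgEquiv.ofAlgHom
    (rlift (ru k) (rt k) (rx k) (ry k) (by rw [rel]; ring))
    (rlift (ru k) (rt k) (rx k) (ry k) (by rw [rel]; ring))
    (by apply rext <;> simp) (by apply rext <;> simp)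

@[simp] lemma swapR_t : swapR (rt k) = ru k := by simp [swapR]
@[simp] lemma swapR_u : swapR (ru k) = rt k := by simp [swapR]
@[simp] lemma swapR_x : swapR (rx k) = rx k := by simp [swapR]

lemma lifts_swap : Lifts (swapA (k := k)) := by
  apply lifts_of swapR <;> simp [rho_t, rho_u]

abbrev al (e : k) : SL2Ring k := algebraMap k _ e

def elemRhom (e f : k) : SL2Ring k →ₐ[k] SL2Ring k :=
  rlift (rt k + rx k * (al e * ru k + al f)) (ru k) (rx k) (ry k + ru k * (al e * ru k + al f))
    (by linear_combination rel k)

lemma elemRhom_comp (e f : k) : (elemRhom e f).comp (elemRhom (-e) (-f)) = AlgHom.id k _ := by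
  apply rext <;> simp [elemRhom, al] <;> ring

def elemR (e f : k) : SL2Ring k ≃ₐ[k] SL2Ring k :=
  AlgEquiv.ofAlgHom (elemRhom e f) (elemRhom (-e) (-f)) (elemRhom_comp e f)
    (by simpa using elemRhom_comp (-e) (-f))

lemma lifts_elem1 (e f : k) : Lifts (elem1 e f) := by
  apply lifts_of (elemR e f) <;>
    simp [rho_t, rho_u, rho_x, elemR, elemRhom, al, algebraMap_eq]
  ring

lemma map_C' (β : A k ≃ₐ[k] A k) (a : k) : β (C a) = C a := by
  rw [← algebraMap_eq]; exact β.commutes a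

lemma elem0_eq (e f : k) : elem0 e f = swapA * elem1 e f * swapA := by
  apply AlgEquiv.coe_toAlgHom_injective
  apply MvPolynomial.algHom_ext; intro i
  fin_cases i <;> simp [map_C']

lemma lifts_elem0 (e f : k) : Lifts (elem0 e f) := by
  rw [elem0_eq]
  exact (lifts_swap.mul (lifts_elem1 e f)).mul lifts_swap

lemma lifts_neg : Lifts (scaleA (-1 : k) (by simp)) := by
  have : scaleA (-1 : k) (by simp) = swapA * (elem1 1 0 * elem0 (-1) 0 * elem1 1 0) := by
    apply AlgEquiv.coe_toAlgHom_injective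
    apply MvPolynomial.algHom_ext; intro i
    fin_cases i <;> simp
  rw [this]
  exact lifts_swap.mul (((lifts_elem1 _ _).mul (lifts_elem0 _ _)).mul (lifts_elem1 _ _))

/-! ### Automorphisms tangent to the identity lift -/

def hmap : A k →ₐ[k] SL2Ring k := aeval ![rx k * ru k, rx k * rt k]

lemma hmap_expand (p : A k) : ∃ q, hmap p = al (cc p) +
    rx k * (al (dd 0 p) * ru k + al (dd 1 p) * rt k) + rx k ^ 2 * q := by
  induction p using MvPolynomial.induction_on with
  | C a => exact ⟨0, by simp [hmap, al, cc, dd]⟩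
  | add p q hp hq =>
    obtain ⟨a, ha⟩ := hp
    obtain ⟨b, hb⟩ := hq
    refine ⟨a + b, ?_⟩
    rw [map_add, ha, hb]
    simp [al, cc, dd]
    ring
  | mul_X p j hp =>
    obtain ⟨a, ha⟩ := hp
    rw [map_mul, ha]
    fin_cases j
    · refine ⟨(al (dd 0 p) * ru k + al (dd 1 p) * rt k) * ru k + rx k * a * ru k, ?_⟩
      simp [al, hmap, cc, dd, pderiv_X]
      ring
    · refine ⟨(al (dd 0 p) * ru k + al (dd 1 p) * rt k) * rt k + rx k * a * rt k, ?_⟩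
      simp [al, hmap, cc, dd, pderiv_X]
      ring

lemma lift_hom (γ : A k →ₐ[k] A k) (hc : ∀ i, cc (γ (X i)) = 0)
    (hd : ∀ i p, dd i (γ p) = dd i p) :
    ∃ Φ : SL2Ring k →ₐ[k] SL2Ring k, Φ (rx k) = rx k ∧ ∀ p, Φ (hmap p) = hmap (γ p) := by
  obtain ⟨a, ha⟩ := hmap_expand (γ (X 0))
  obtain ⟨b, hb⟩ := hmap_expand (γ (X 1))
  rw [hc, hd, hd] at ha hb
  simp [al, dd, pderiv_X] at ha hb
  refine ⟨rlift (rt k + rx k * b) (ru k + rx k * a) (rx k)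
    (ry k + rt k * a + ru k * b + rx k * a * b) (by linear_combination rel k), by simp, ?_⟩
  intro p
  have : (rlift (rt k + rx k * b) (ru k + rx k * a) (rx k)
    (ry k + rt k * a + ru k * b + rx k * a * b) (by linear_combination rel k)).comp hmap
      = hmap.comp γ := by
    apply MvPolynomial.algHom_ext; intro i
    fin_cases i
    · simp [ha]
      simp [hmap]
      ring
    · simp [hb]
      simp [hmap]
      ring
  exact congrArg (fun f => f p) this

lemma comp_id (γ γ' : A k →ₐ[k] A k) (h : ∀ p, γ (γ' p) = p) (Φ Φ' : SL2Ring k →ₐ[k] SL2Ring k)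
    (hx : Φ (rx k) = rx k) (hx' : Φ' (rx k) = rx k)
    (hΦ : ∀ p, Φ (hmap p) = hmap (γ p)) (hΦ' : ∀ p, Φ' (hmap p) = hmap (γ' p)) :
    Φ.comp Φ' = AlgHom.id k _ := by
  have key : ∀ p, Φ (Φ' (hmap p)) = hmap p := by
    intro p
    rw [hΦ', hΦ, h]
  have ht : Φ (Φ' (rt k)) = rt k := by
    have := key (X 1)
    simp [hmap, hx, hx'] at this
    exact rx_cancel' this
  have hu : Φ (Φ' (ru k)) = ru k := by
    have := key (X 0)
    simp [hmap, hx, hx'] at this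
    exact rx_cancel' this
  apply rext
  · simpa using ht
  · simpa using hu
  · simp [hx, hx']
  · apply rx_cancel'
    have h1 := congrArg (fun r => Φ (Φ' r)) (rel k)
    simp only [map_mul, hx, hx', ht, hu, map_add, map_one] at h1
    simp [h1, rel]

lemma lifts_tangent (γ : A k ≃ₐ[k] A k) (hc : ∀ i, cc (γ (X i)) = 0)
    (h00 : dd 0 (γ (X 0)) = 1) (h10 : dd 1 (γ (X 0)) = 0)
    (h01 : dd 0 (γ (X 1)) = 0) (h11 : dd 1 (γ (X 1)) = 1) : Lifts γ := by
  have hC : ∀ p, cc (γ p) = cc p := fun p => cc_hom (γ : A k →ₐ[k] A k) hc p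
  have hD : ∀ i p, dd i (γ p) = dd i p := by
    intro i p
    have := dd_hom (γ : A k →ₐ[k] A k) hc p i
    simp only [AlgEquiv.coe_toAlgHom] at this
    rw [this]
    fin_cases i
    · simp only [Fin.zero_eta]; rw [h00, h01]; ring
    · simp only [Fin.mk_one]; rw [h10, h11]; ring
  obtain ⟨Φ, hx, hΦ⟩ := lift_hom (γ : A k →ₐ[k] A k) hc hD
  obtain ⟨Φ', hx', hΦ'⟩ := lift_hom (γ.symm : A k →ₐ[k] A k)
    (fun i => by
      have := hC (γ.symm (X i))
      simp only [AlgEquiv.apply_symm_apply] at this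
      simp only [AlgEquiv.coe_toAlgHom]
      rw [← this]; simp [cc])
    (fun i p => by
      have := hD i (γ.symm p)
      simp only [AlgEquiv.apply_symm_apply] at this
      exact this.symm)
  have hρ : ∀ p, rhoLamStar k 1 (hmap p) = p := by
    intro p
    have : (rhoLamStar k 1).comp hmap = AlgHom.id k _ := by
      ext i
      fin_cases i <;> simp [hmap, rho_t, rho_u, rho_x]
    exact congrArg (fun f => f p) this
  let Ψ : SL2Ring k ≃ₐ[k] SL2Ring k := AlgEquiv.ofAlgHom Φ Φ'
    (comp_id _ _ (by simp) _ _ hx hx' hΦ hΦ') (comp_id _ _ (by simp) _ _ hx' hx hΦ' hΦ)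
  apply lifts_of Ψ
  · exact hx
  · have := congrArg (rhoLamStar k 1) (hΦ (X 1))
    rw [hρ] at this
    simp [hmap, hx, rho_x] at this
    exact this.symm
  · have := congrArg (rhoLamStar k 1) (hΦ (X 0))
    rw [hρ] at this
    simp [hmap, hx, rho_x] at this
    exact this.symm

/-! ### Gaussian elimination -/

def Dec (β : A k ≃ₐ[k] A k) : Prop := ∃ (l : k) (hl : l ≠ 0) (γ : A k ≃ₐ[k] A k),
  Lifts γ ∧ β = scaleA l hl * γ

lemma Dec.of_mul {β E : A k ≃ₐ[k] A k} (hE : Lifts E) (h : Dec (β * E)) : Dec β := by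
  obtain ⟨l, hl, γ, hγ, e⟩ := h
  exact ⟨l, hl, γ * E⁻¹, hγ.mul hE.inv, by rw [← mul_assoc, ← e]; simp⟩

lemma dec0 (β : A k ≃ₐ[k] A k) (hc : ∀ i, cc (β (X i)) = 0)
    (h00 : dd 0 (β (X 0)) ≠ 0) (h10 : dd 1 (β (X 0)) = 0)
    (h01 : dd 0 (β (X 1)) = 0) (h11 : dd 1 (β (X 1)) = 1) : Dec β := by
  set l := dd 0 (β (X 0)) with hl
  refine ⟨l, h00, (scaleA l h00)⁻¹ * β, ?_, by simp⟩
  have hs0 : (scaleA l h00)⁻¹ (X 0) = C l⁻¹ * X 0 := by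
    change (scaleA l h00).symm (X 0) = _
    simp [scaleA]
  have hs1 : (scaleA l h00)⁻¹ (X 1) = X 1 := by
    change (scaleA l h00).symm (X 1) = _
    simp [scaleA]
  have hsc : ∀ i, cc (((scaleA l h00)⁻¹ : A k ≃ₐ[k] A k) (X i)) = 0 := by
    intro i
    fin_cases i
    · simp [hs0, cc]
    · simp [hs1, cc]
  have hC := fun p => cc_hom (((scaleA l h00)⁻¹ : A k ≃ₐ[k] A k) : A k →ₐ[k] A k) hsc p
  have hD := fun p => dd_hom (((scaleA l h00)⁻¹ : A k ≃ₐ[k] A k) : A k →ₐ[k] A k) hsc p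
  simp only [AlgEquiv.coe_toAlgHom, hs0, hs1] at hC hD
  apply lifts_tangent
  · intro i
    rw [AlgEquiv.mul_apply, hC, hc]
  · rw [AlgEquiv.mul_apply, hD, h10, ← hl]
    simp [dd, h00]
  · rw [AlgEquiv.mul_apply, hD, h10, ← hl]
    simp [dd, pderiv_X]
  · rw [AlgEquiv.mul_apply, hD, h01, h11]
    simp [dd, pderiv_X]
  · rw [AlgEquiv.mul_apply, hD, h01, h11]
    simp [dd, pderiv_X]

lemma dec1 (β : A k ≃ₐ[k] A k) (hc : ∀ i, cc (β (X i)) = 0)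
    (h00 : dd 0 (β (X 0)) ≠ 0) (h10 : dd 1 (β (X 0)) = 0)
    (h11 : dd 1 (β (X 1)) = 1) : Dec β := by
  have c0 := hc 0
  have c1 := hc 1
  apply Dec.of_mul (lifts_elem1 (-(dd 0 (β (X 1)) / dd 0 (β (X 0)))) 0)
  simp only [dd, cc] at *
  apply dec0
  · intro i
    fin_cases i <;> simp [cc, map_C', c0, c1]
  · simpa [dd] using h00
  · simpa [dd] using h10
  · simp [dd, map_C']
    field_simp
    simp
  · simp [dd, map_C', h10, h11]

lemma dec2 (β : A k ≃ₐ[k] A k) (hc : ∀ i, cc (β (X i)) = 0)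
    (h : dd 0 (β (X 0)) * dd 1 (β (X 1)) - dd 1 (β (X 0)) * dd 0 (β (X 1)) ≠ 0)
    (h11 : dd 1 (β (X 1)) = 1) : Dec β := by
  have c0 := hc 0
  have c1 := hc 1
  apply Dec.of_mul (lifts_elem0 (- dd 1 (β (X 0))) 0)
  simp only [dd, cc] at *
  apply dec1
  · intro i
    fin_cases i <;> simp [cc, map_C', c0, c1]
  · simp [dd, map_C']
    intro h'
    apply h
    rw [h11]
    linear_combination h'
  · simp [dd, map_C', h11]
  · simpa [dd] using h11

lemma dec3 (β : A k ≃ₐ[k] A k) (hc : ∀ i, cc (β (X i)) = 0)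
    (h : dd 0 (β (X 0)) * dd 1 (β (X 1)) - dd 1 (β (X 0)) * dd 0 (β (X 1)) ≠ 0)
    (h10 : dd 1 (β (X 0)) ≠ 0) : Dec β := by
  have c0 := hc 0
  have c1 := hc 1
  apply Dec.of_mul (lifts_elem1 ((1 - dd 1 (β (X 1))) / dd 1 (β (X 0))) 0)
  simp only [dd, cc] at *
  apply dec2
  · intro i
    fin_cases i <;> simp [cc, map_C', c0, c1]
  · simp [dd, map_C']
    intro h'
    apply h
    linear_combination h'
  · simp [dd, map_C']
    field_simp
    simp

lemma dec4 (β : A k ≃ₐ[k] A k) (hc : ∀ i, cc (β (X i)) = 0)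
    (h : dd 0 (β (X 0)) * dd 1 (β (X 1)) - dd 1 (β (X 0)) * dd 0 (β (X 1)) ≠ 0) : Dec β := by
  have c0 := hc 0
  have c1 := hc 1
  by_cases h10 : dd 1 (β (X 0)) = 0
  · apply Dec.of_mul (lifts_elem0 1 0)
    simp only [dd, cc] at *
    apply dec3
    · intro i
      fin_cases i <;> simp [cc, c0, c1]
    · simp [dd]
      intro h'
      apply h
      linear_combination h'
    · simp [dd, h10]
      intro h'
      apply h
      rw [h', h10]; ring
  · exact dec3 β hc h h10

lemma det_ne (β : A k ≃ₐ[k] A k) (hc : ∀ i, cc (β (X i)) = 0) :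
    dd 0 (β (X 0)) * dd 1 (β (X 1)) - dd 1 (β (X 0)) * dd 0 (β (X 1)) ≠ 0 := by
  have hD := fun p => dd_hom (β : A k →ₐ[k] A k) hc (β.symm p)
  simp only [AlgEquiv.coe_toAlgHom, AlgEquiv.apply_symm_apply] at hD
  have e00 := hD (X 0) 0
  have e01 := hD (X 0) 1
  have e10 := hD (X 1) 0
  have e11 := hD (X 1) 1
  simp only [dd, pderiv_X] at *
  simp at e00 e01 e10 e11
  intro h
  have : (1 : k) = 0 := by
    generalize constantCoeff (pderiv 0 (β (X 0))) = a at *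
    generalize constantCoeff (pderiv 1 (β (X 0))) = b at *
    generalize constantCoeff (pderiv 0 (β (X 1))) = c at *
    generalize constantCoeff (pderiv 1 (β (X 1))) = d at *
    generalize constantCoeff (pderiv 0 (β.symm (X 0))) = a' at *
    generalize constantCoeff (pderiv 1 (β.symm (X 0))) = b' at *
    generalize constantCoeff (pderiv 0 (β.symm (X 1))) = c' at *
    generalize constantCoeff (pderiv 1 (β.symm (X 1))) = d' at *
    grind
  exact one_ne_zero this

lemma dec (β : A k ≃ₐ[k] A k) : Dec β := by
  apply Dec.of_mul (lifts_elem0 0 (- cc (β (X 0))))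
  apply Dec.of_mul (lifts_elem1 0 (- cc (β (X 1))))
  have hc : ∀ i, cc ((β * elem0 0 (- cc (β (X 0))) * elem1 0 (- cc (β (X 1)))) (X i)) = 0 := by
    intro i
    fin_cases i <;> simp [cc, map_C']
  exact dec4 _ hc (det_ne _ hc)

/-! ### Part (a) -/

lemma rho_eq (l : k) (hl : l ≠ 0) :
    rhoLamStar k l = (scaleA l hl : A k →ₐ[k] A k).comp (rhoLamStar k 1) := by
  apply rext <;> simp [rho_t, rho_u, rho_x, rho_y]

def sec : A k →ₐ[k] SL2Ring k := aeval ![ru k, rt k]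

lemma rho_sec (p : A k) : rhoLamStar k 1 (sec p) = p := by
  have : (rhoLamStar k 1).comp sec = AlgHom.id k _ := by
    apply MvPolynomial.algHom_ext; intro i
    fin_cases i <;> simp [sec, rho_t, rho_u]
  exact congrArg (fun f => f p) this

lemma partA (σ : SL2Ring k →ₐ[k] A k) (hσ : Function.Surjective σ)
    (hk : RingHom.ker σ = RingHom.ker (rhoLamStar k 1)) :
    ∃ lam : k, lam ≠ 0 ∧ ∃ Φ : SL2Ring k ≃ₐ[k] SL2Ring k,
      σ = (rhoLamStar k lam).comp Φ.toAlgHom := by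
  have h1 : ∀ r, σ (sec (rhoLamStar k 1 r)) = σ r := by
    intro r
    rw [← sub_eq_zero, ← map_sub, ← RingHom.mem_ker, hk, RingHom.mem_ker, map_sub, rho_sec,
      sub_self]
  have hb : Function.Bijective (σ.comp sec) := by
    constructor
    · rw [injective_iff_map_eq_zero]
      intro a ha
      have : sec a ∈ RingHom.ker σ := ha
      rw [hk, RingHom.mem_ker, rho_sec] at this
      exact this
    · intro a
      obtain ⟨r, rfl⟩ := hσ a
      exact ⟨_, h1 r⟩
  obtain ⟨l, hl, γ, ⟨Φ, hΦ⟩, e⟩ := dec (AlgEquiv.ofBijective _ hb)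
  refine ⟨l, hl, Φ, ?_⟩
  apply AlgHom.ext
  intro r
  have := congrArg (fun f => f (rhoLamStar k 1 r)) e
  simp [h1] at this
  rw [this, rho_eq l hl, hΦ]
  simp

lemma partB_easy (lam : k) (h : lam ≠ 0) : ∃ Φ : SL2Ring k ≃ₐ[k] SL2Ring k,
    rhoLamStar k (-lam) = (rhoLamStar k lam).comp Φ.toAlgHom := by
  obtain ⟨Φ, hΦ⟩ := lifts_neg (k := k)
  refine ⟨Φ, ?_⟩
  apply AlgHom.ext
  intro r
  have e : scaleA (-lam) (neg_ne_zero.2 h) = scaleA lam h * scaleA (-1) (by simp) := by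
    apply AlgEquiv.coe_toAlgHom_injective
    apply MvPolynomial.algHom_ext; intro i
    fin_cases i <;> simp
  rw [rho_eq lam h, rho_eq (-lam) (neg_ne_zero.2 h), e]
  simp [hΦ]


/-! ### The polynomial subring `k[x][u,t]` -/

abbrev S (k : Type*) [Field k] := MvPolynomial (Fin 2) (Polynomial k)

def sX : S k := C Polynomial.X

def jmap : S k →+* SL2Ring k :=
  eval₂Hom ((Polynomial.aeval (rx k) : Polynomial k →ₐ[k] SL2Ring k) : Polynomial k →+* SL2Ring k)
    ![ru k, rt k]

@[simp] lemma jmap_0 : jmap (X 0 : S k) = ru k := by simp [jmap]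
@[simp] lemma jmap_1 : jmap (X 1 : S k) = rt k := by simp [jmap]
@[simp] lemma jmap_x : jmap (sX : S k) = rx k := by simp [jmap, sX]
@[simp] lemma jmap_c (a : k) : jmap (C (Polynomial.C a) : S k) = al a := by simp [jmap]

lemma S_ext {W : Type*} [Semiring W] {f g : S k →+* W}
    (hc : ∀ a : k, f (C (Polynomial.C a)) = g (C (Polynomial.C a)))
    (hx : f sX = g sX) (hX : ∀ i, f (X i) = g (X i)) : f = g := by
  apply MvPolynomial.ringHom_ext
  · intro p
    have : f.comp C = g.comp C := by
      apply Polynomial.ringHom_ext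
      · exact hc
      · exact hx
    exact congrArg (fun h => h p) this
  · exact hX

lemma denom (r : SL2Ring k) : ∃ (n : ℕ) (s : S k), rx k ^ n * r = jmap s := by
  obtain ⟨p, rfl⟩ := Ideal.Quotient.mk_surjective r
  induction p using MvPolynomial.induction_on with
  | C a => exact ⟨0, C (Polynomial.C a), by rw [jmap_c]; simp [al]; rfl⟩
  | add p q hp hq =>
    obtain ⟨n, s, hs⟩ := hp
    obtain ⟨m, r, hr⟩ := hq
    refine ⟨n + m, sX ^ m * s + sX ^ n * r, ?_⟩
    simp only [map_add, map_mul, map_pow, jmap_x, ← hs, ← hr]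
    ring
  | mul_X p i hp =>
    obtain ⟨n, s, hs⟩ := hp
    fin_cases i
    · refine ⟨n, s * X 1, ?_⟩
      simp only [map_mul, jmap_1, ← hs]
      rw [mul_assoc]; rfl
    · refine ⟨n, s * X 0, ?_⟩
      simp only [map_mul, jmap_0, ← hs]
      rw [mul_assoc]; rfl
    · refine ⟨n, s * sX, ?_⟩
      simp only [map_mul, jmap_x, ← hs]
      rw [mul_assoc]; rfl
    · refine ⟨n + 1, s * (X 1 * X 0 + 1), ?_⟩
      simp only [map_mul, map_add, map_one, jmap_0, jmap_1, ← hs, ← rel]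
      have : (Ideal.Quotient.mk (Ideal.span {sl2Rel k})) (X 3) = ry k := rfl
      simp only [Fin.reduceFinMk, this]
      ring

lemma sX_ne : (sX : S k) ≠ 0 := by simp [sX]

def iota : SL2Ring k →ₐ[k] FractionRing (S k) :=
  rlift (algebraMap (S k) _ (X 1)) (algebraMap (S k) _ (X 0)) (algebraMap (S k) _ sX)
    ((algebraMap (S k) _ (X 1 * X 0 + 1)) / (algebraMap (S k) _ sX)) (by
      have : algebraMap (S k) (FractionRing (S k)) sX ≠ 0 := by
        simpa using sX_ne
      rw [mul_div_cancel₀ _ this]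
      simp)

lemma jmap_inj : Function.Injective (jmap (k := k)) := by
  have h : (iota (k := k) : SL2Ring k →+* _).comp jmap = algebraMap (S k) (FractionRing (S k)) := by
    apply S_ext
    · intro a
      simp only [RingHom.comp_apply, jmap_c, al, RingHom.coe_coe, AlgHom.commutes]
      rw [IsScalarTower.algebraMap_apply k (S k) (FractionRing (S k))]
      rfl
    · simp [iota]
    · intro i
      fin_cases i <;> simp [iota]
  have h2 := IsFractionRing.injective (S k) (FractionRing (S k))
  rw [← h] at h2
  exact Function.Injective.of_comp h2

def evS (c : k) : S k →+* A k := map (Polynomial.evalRingHom c)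

@[simp] lemma evS_X (c : k) (i) : evS c (X i) = X i := by simp [evS]
@[simp] lemma evS_C (c : k) (p) : evS c (C p) = C (p.eval c) := by simp [evS]
@[simp] lemma evS_x (c : k) : evS c sX = C c := by simp [sX]

lemma sX_dvd (s : S k) : sX ∣ s ↔ evS 0 s = 0 := by
  apply C_dvd_iff_map_hom_eq_zero
  intro p
  simp [Polynomial.X_dvd_iff, Polynomial.coeff_zero_eq_eval_zero]

lemma sX_prime : Prime (sX : S k) := by
  refine ⟨sX_ne, ?_, ?_⟩
  · intro h
    have := h.map (evS (0 : k))
    simp at this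
  · intro a b
    simp only [sX_dvd, map_mul, mul_eq_zero]
    exact id

lemma dvd_of_mem (s : S k) (r : SL2Ring k) (h : jmap s = rx k * r) :
    (X 0 * X 1 + 1 : A k) ∣ evS 0 s := by
  let I : Ideal (A k) := Ideal.span {X 0 * X 1 + 1}
  let g : SL2Ring k →ₐ[k] (A k ⧸ I) := rlift (Ideal.Quotient.mk I (X 1)) (Ideal.Quotient.mk I (X 0))
    0 0 (by
      rw [mul_zero, ← map_mul, ← map_one (Ideal.Quotient.mk I), ← map_add, eq_comm,
        Ideal.Quotient.eq_zero_iff_mem, mul_comm]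
      exact Ideal.subset_span rfl)
  have e : (g : SL2Ring k →+* _).comp jmap = (Ideal.Quotient.mk I).comp (evS 0) := by
    apply S_ext
    · intro a
      simp only [RingHom.comp_apply, jmap_c, al, RingHom.coe_coe, AlgHom.commutes, evS_C,
        Polynomial.eval_C]
      rfl
    · simp [g]
    · intro i
      fin_cases i <;> simp [g]
  have e2 := congrArg (fun f => f s) e
  simp only [RingHom.comp_apply, RingHom.coe_coe, h, map_mul] at e2
  have : g (rx k) = 0 := by simp [g]
  rw [this, zero_mul, eq_comm, Ideal.Quotient.eq_zero_iff_mem, Ideal.mem_span_singleton] at e2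
  exact e2

/-! ### Deformations of the identity of the plane -/

lemma deform_factor {A' : Type*} [CommRing A'] [IsDomain A'] (Ψ : A' →+* Polynomial A')
    (h0 : ∀ p, (Ψ p).coeff 0 = p) {a b : A'} (hab : a * b ≠ 0)
    (h : Ψ (a * b) = Polynomial.C (a * b)) : Ψ a = Polynomial.C a := by
  have ha : Ψ a ≠ 0 := by
    intro h'
    have := h0 a
    rw [h'] at this
    apply hab; rw [← this]; simp
  have hb : Ψ b ≠ 0 := by
    intro h'
    have := h0 b
    rw [h'] at this
    apply hab; rw [← this]; simp
  have hd := congrArg Polynomial.natDegree h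
  rw [map_mul, Polynomial.natDegree_mul ha hb, Polynomial.natDegree_C] at hd
  have : (Ψ a).natDegree = 0 := by omega
  rw [Polynomial.eq_C_of_natDegree_eq_zero this, h0]

lemma deform_trivial (Ψ : A k →ₐ[k] Polynomial (A k)) (h0 : ∀ p, (Ψ p).coeff 0 = p)
    (f : A k) (hf : f ≠ 0) (hd : (X 0 * X 1 + 1 : A k) ∣ f) (h : Ψ f = Polynomial.C f) (i : Fin 2) :
    Ψ (X i) = Polynomial.C (X i) := by
  obtain ⟨g, rfl⟩ := hd
  have h1 := deform_factor (Ψ : A k →+* _) h0 hf h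
  simp only [RingHom.coe_coe, map_add, map_one, add_left_inj] at h1
  have hne : (X 0 * X 1 : A k) ≠ 0 := mul_ne_zero (X_ne_zero _) (X_ne_zero _)
  fin_cases i
  · exact deform_factor (Ψ : A k →+* _) h0 hne h1
  · rw [mul_comm] at h1 hne
    exact deform_factor (Ψ : A k →+* _) h0 hne h1

def psi (F : Fin 2 → Polynomial (S k)) : S k →+* Polynomial (S k) :=
  eval₂Hom ((Polynomial.C).comp C) F

@[simp] lemma psi_X (F : Fin 2 → Polynomial (S k)) (i) : psi F (X i) = F i := by simp [psi]
@[simp] lemma psi_C (F : Fin 2 → Polynomial (S k)) (p) : psi F (C p) = Polynomial.C (C p) := by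
  simp [psi]

def sc {W : Type*} [CommRing W] (r : W) : Polynomial W →+* Polynomial W :=
  Polynomial.compRingHom (Polynomial.C r * Polynomial.X)

lemma sc_coeff {W : Type*} [CommRing W] (r : W) (p : Polynomial W) (n : ℕ) :
    (sc r p).coeff n = p.coeff n * r ^ n := by
  simp [sc, Polynomial.comp_C_mul_X_coeff]

@[simp] lemma sc_C {W : Type*} [CommRing W] (r a : W) : sc r (Polynomial.C a) = Polynomial.C a := by
  simp [sc]

lemma exists_poly {W : Type*} [CommRing W] (c : ℕ → W) (N : ℕ) (h : ∀ i, N < i → c i = 0) :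
    ∃ P : Polynomial W, ∀ i, P.coeff i = c i := by
  refine ⟨∑ i ∈ Finset.range (N + 1), Polynomial.monomial i (c i), ?_⟩
  intro i
  simp only [Polynomial.finsetSum_coeff, Polynomial.coeff_monomial]
  simp only [Finset.sum_ite_eq', Finset.mem_range]
  split_ifs with hi
  · rfl
  · exact (h i (by omega)).symm

def ex (q : ℕ) : S k →+* S k := map ((Polynomial.expand k q : _ →ₐ[k] _) : Polynomial k →+* _)

@[simp] lemma ex_X (q : ℕ) (i) : ex q (X i : S k) = X i := by simp [ex]
@[simp] lemma ex_C (q : ℕ) (p) : ex q (C p : S k) = C (Polynomial.expand k q p) := by simp [ex]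
lemma ex_x (q : ℕ) : ex q (sX : S k) = sX ^ q := by simp [sX]

lemma ex_inj {q : ℕ} (hq : 0 < q) : Function.Injective (ex (k := k) q) :=
  map_injective _ (Polynomial.expand_injective hq)

lemma ev_ex {q : ℕ} (hq : 0 < q) (s : S k) : evS 0 (ex q s) = evS 0 s := by
  have : (evS (0 : k)).comp (ex q) = evS 0 := by
    apply MvPolynomial.ringHom_ext
    · intro p
      simp [Polynomial.expand_eval, hq.ne']
    · simp
  exact congrArg (fun f => f s) this

lemma finmul {s : S k} (hs : s ≠ 0) : FiniteMultiplicity (sX : S k) s :=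
  FiniteMultiplicity.of_prime_left sX_prime hs

/-- Reduction of a deformation modulo `x`, after ramification and rescaling. -/
lemma reduce (F : Fin 2 → Polynomial (S k)) (hF0 : ∀ l, (F l).coeff 0 = X l)
    (hF : ∃ l, F l ≠ Polynomial.C (X l)) (f : S k) (hf : psi F f = Polynomial.C f) :
    ∃ Ψ : A k →ₐ[k] Polynomial (A k), (∀ p, (Ψ p).coeff 0 = p) ∧
      Ψ (evS 0 f) = Polynomial.C (evS 0 f) ∧ ∃ l, Ψ (X l) ≠ Polynomial.C (X l) := by
  obtain ⟨N, hN⟩ : ∃ N, ∀ l i, N < i → (F l).coeff i = 0 := by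
    refine ⟨max (F 0).natDegree (F 1).natDegree, ?_⟩
    intro l i hi
    apply Polynomial.coeff_eq_zero_of_natDegree_lt
    fin_cases l
    · exact lt_of_le_of_lt (le_max_left _ _) hi
    · exact lt_of_le_of_lt (le_max_right _ _) hi
  set q := N.factorial with hq
  have hq0 : 0 < q := N.factorial_pos
  let Q : ℕ → Prop := fun m => ∀ l i, sX ^ (m * i) ∣ ex q ((F l).coeff i)
  have hQ0 : Q 0 := by intro l i; simp
  have hQn : ∃ M, ¬ Q M := by
    obtain ⟨l, hl⟩ := hF
    obtain ⟨i, hi, hne⟩ : ∃ i, i ≠ 0 ∧ (F l).coeff i ≠ 0 := by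
      by_contra! hcon
      apply hl
      ext1 i
      rcases Nat.eq_zero_or_pos i with rfl | hi
      · simp [hF0]
      · rw [hcon i hi.ne', Polynomial.coeff_C_of_ne_zero hi.ne']
    have hne' : ex q ((F l).coeff i) ≠ 0 := by
      rw [Ne, map_eq_zero_iff _ (ex_inj hq0)]; exact hne
    obtain ⟨n, hn⟩ := finmul hne'
    refine ⟨n + 1, fun h => hn ?_⟩
    exact (pow_dvd_pow _ (Nat.le_mul_of_pos_right _ (Nat.pos_of_ne_zero hi))).trans (h l i)
  obtain ⟨m, hm, hm1⟩ : ∃ m, Q m ∧ ¬ Q (m + 1) := by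
    by_contra! hcon
    obtain ⟨M, hM⟩ := hQn
    exact hM (Nat.rec hQ0 hcon M)
  choose c hc using hm
  have hsp : ∀ n, (sX : S k) ^ n ≠ 0 := fun n => pow_ne_zero _ sX_ne
  have hcN : ∀ l i, N < i → c l i = 0 := by
    intro l i hi
    have := hc l i
    rw [hN l i hi, map_zero, eq_comm, mul_eq_zero] at this
    exact this.resolve_left (hsp _)
  choose G hG using fun l => exists_poly (c l) N (hcN l)
  have hG0 : ∀ l, (G l).coeff 0 = X l := by
    intro l
    have := hc l 0
    rw [hF0] at this
    simpa [hG] using this.symm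
  have hsc : ∀ l, sc (sX ^ m) (G l) = (F l).map (ex q) := by
    intro l
    ext1 i
    rw [sc_coeff, Polynomial.coeff_map, hc, hG, pow_mul, mul_comm]
  have hcomp : ((sc (sX ^ m)).comp (psi G)).comp (ex q)
      = (Polynomial.mapRingHom (ex q)).comp (psi F) := by
    apply MvPolynomial.ringHom_ext
    · intro p
      simp
    · intro l
      simp [hsc]
  have hinj : Function.Injective (sc ((sX : S k) ^ m)) := by
    intro P P' h
    ext1 i
    have := congrArg (fun P => P.coeff i) h
    simp only [sc_coeff] at this
    exact mul_right_cancel₀ (pow_ne_zero _ (hsp _)) this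
  have hGf : psi G (ex q f) = Polynomial.C (ex q f) := by
    apply hinj
    have := congrArg (fun g => g f) hcomp
    simp only [RingHom.comp_apply, hf] at this
    rw [this]
    simp
  let Ψ : A k →ₐ[k] Polynomial (A k) := aeval (fun l => (G l).map (evS 0))
  have hΨX : ∀ l, Ψ (X l) = (G l).map (evS 0) := by intro l; simp [Ψ]
  have hcomp2 : (Polynomial.mapRingHom (evS (0 : k))).comp (psi G)
      = (Ψ : A k →+* _).comp (evS 0) := by
    apply MvPolynomial.ringHom_ext
    · intro p
      simp [Ψ]
    · intro l
      simp [hΨX]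
  refine ⟨Ψ, ?_, ?_, ?_⟩
  · intro p
    have : ((Polynomial.constantCoeff : Polynomial (A k) →+* A k)).comp (Ψ : A k →+* _)
        = RingHom.id _ := by
      apply MvPolynomial.ringHom_ext
      · intro a
        simp [Ψ]
      · intro l
        simp [hΨX, hG0]
    exact congrArg (fun g => g p) this
  · have := congrArg (fun g => g (ex q f)) hcomp2
    simp only [RingHom.comp_apply, hGf, ev_ex hq0] at this
    simp [ev_ex hq0] at this
    exact this.symm
  · simp only [Q, not_forall] at hm1
    obtain ⟨l, i, hli⟩ := hm1
    refine ⟨l, fun hcon => ?_⟩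
    have hi : i ≠ 0 := by
      rintro rfl
      simp at hli
    have hne : (F l).coeff i ≠ 0 := by
      intro h
      rw [h] at hli
      simp at hli
    have hiN : i ≤ N := by
      by_contra! h
      exact hne (hN l i h)
    obtain ⟨q', hq'⟩ : i ∣ q := Nat.dvd_factorial (Nat.pos_of_ne_zero hi) hiN
    have hc0 : sX ∣ c l i := by
      rw [sX_dvd, ← hG]
      have := congrArg (fun P => P.coeff i) hcon
      simpa [hΨX, Polynomial.coeff_C_of_ne_zero hi] using this
    obtain ⟨a0, ha0, hnd⟩ := (finmul hne).exists_eq_pow_mul_and_not_dvd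
    set w := multiplicity sX ((F l).coeff i)
    have hnd' : ¬ sX ∣ ex q a0 := by
      rw [sX_dvd, ev_ex hq0, ← sX_dvd]; exact hnd
    have e1 : ex q ((F l).coeff i) = sX ^ (q * w) * ex q a0 := by
      rw [ha0, map_mul, map_pow, ex_x, pow_mul]
    have hlt : m * i < q * w := by
      by_contra! hle
      apply hnd'
      obtain ⟨d, hd⟩ := Nat.exists_eq_add_of_le hle
      have := hc l i
      rw [e1, hd, pow_add, mul_assoc] at this
      rw [mul_left_cancel₀ (hsp _) this]
      exact Dvd.dvd.mul_left hc0 _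
    apply hli
    rw [e1]
    apply Dvd.dvd.mul_right
    apply pow_dvd_pow
    rw [hq'] at hlt ⊢
    have : m < q' * w := by
      by_contra! h
      have := Nat.mul_le_mul_left i h
      nlinarith
    have := Nat.mul_le_mul_left i this
    nlinarith

/-! ### Automorphisms fixing `x` preserve `k[x,u,t]` -/

lemma denom_poly (P : Polynomial (SL2Ring k)) :
    ∃ N : ℕ, ∀ i, ∃ s : S k, rx k ^ N * P.coeff i = jmap s := by
  induction P using Polynomial.induction_on' with
  | add p q hp hq =>
    obtain ⟨n, hn⟩ := hp
    obtain ⟨m, hm⟩ := hq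
    refine ⟨n + m, fun i => ?_⟩
    obtain ⟨s, hs⟩ := hn i
    obtain ⟨r, hr⟩ := hm i
    refine ⟨sX ^ m * s + sX ^ n * r, ?_⟩
    simp only [map_add, map_mul, map_pow, jmap_x, ← hs, ← hr, Polynomial.coeff_add]
    ring
  | monomial n a =>
    obtain ⟨N, s, hs⟩ := denom a
    refine ⟨N, fun i => ?_⟩
    rw [Polynomial.coeff_monomial]
    split_ifs
    · exact ⟨s, hs⟩
    · exact ⟨0, by simp⟩

lemma lift_poly (P : Polynomial (SL2Ring k)) (g : S k) (hg : P.coeff 0 = jmap g) (N : ℕ)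
    (hN : ∀ i, ∃ s : S k, rx k ^ N * P.coeff i = jmap s) :
    ∃ F : Polynomial (S k), F.coeff 0 = g ∧ F.map jmap = sc (rx k ^ N) P := by
  have h1 : ∀ i, ∃ s : S k, jmap s = P.coeff i * (rx k ^ N) ^ i ∧ (i = 0 → s = g) := by
    intro i
    rcases Nat.eq_zero_or_pos i with rfl | hi
    · exact ⟨g, by simp [hg], fun _ => rfl⟩
    · obtain ⟨j, rfl⟩ : ∃ j, i = j + 1 := ⟨i - 1, by omega⟩
      obtain ⟨s, hs⟩ := hN (j + 1)
      refine ⟨(sX ^ N) ^ j * s, ?_, by simp⟩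
      simp only [map_mul, map_pow, jmap_x, ← hs]
      ring
  choose c hc hc0 using h1
  obtain ⟨F, hF⟩ := exists_poly c P.natDegree (by
    intro i hi
    apply jmap_inj
    rw [hc, Polynomial.coeff_eq_zero_of_natDegree_lt hi]
    simp)
  refine ⟨F, by rw [hF, hc0 0 rfl], ?_⟩
  ext1 i
  rw [Polynomial.coeff_map, hF, hc, sc_coeff]

lemma nontriv : (1 : SL2Ring k) ≠ 0 := by
  intro h
  have := congrArg (rhoLamStar k 1) h
  simp at this

lemma preserves_t (Φ : SL2Ring k ≃ₐ[k] SL2Ring k) (hΦ : Φ (rx k) = rx k) :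
    ∃ f : S k, Φ (rt k) = jmap f := by
  classical
  have hex : ∃ n : ℕ, ∃ f : S k, rx k ^ n * Φ (rt k) = jmap f := denom _
  obtain ⟨f, hf⟩ := Nat.find_spec hex
  have hmin := fun m => Nat.find_min hex (m := m)
  generalize Nat.find hex = n at *
  rcases n with _ | n
  · exact ⟨f, by simpa using hf⟩
  exfalso
  have hf0 : evS 0 f ≠ 0 := by
    intro h
    rw [← sX_dvd] at h
    obtain ⟨g, rfl⟩ := h
    apply hmin n (Nat.lt_succ_self n)
    refine ⟨g, rx_cancel' ?_⟩
    rw [map_mul, jmap_x] at hf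
    rw [← hf]; ring
  have hfd : (X 0 * X 1 + 1 : A k) ∣ evS 0 f :=
    dvd_of_mem f (rx k ^ n * Φ (rt k)) (by rw [← hf]; ring)
  -- the deformation
  let E : SL2Ring k →ₐ[k] Polynomial (SL2Ring k) :=
    rlift (Polynomial.C (rt k)) (Polynomial.C (ru k) + Polynomial.C (rx k) * Polynomial.X)
      (Polynomial.C (rx k)) (Polynomial.C (ry k) + Polynomial.C (rt k) * Polynomial.X) (by
        have := congrArg (Polynomial.C) (rel k)
        simp only [map_mul, map_add, map_one] at this
        linear_combination this)
  let ψ : SL2Ring k →ₐ[k] Polynomial (SL2Ring k) :=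
    (Polynomial.mapAlgHom (Φ : SL2Ring k →ₐ[k] SL2Ring k)).comp
      (E.comp (Φ.symm : SL2Ring k →ₐ[k] SL2Ring k))
  have hψ : ∀ r, ψ (Φ r) = (E r).map (Φ : SL2Ring k →+* SL2Ring k) := by
    intro r
    simp [ψ]
  have hE0 : ∀ r, (E r).coeff 0 = r := by
    intro r
    have : ((Polynomial.aeval (0 : SL2Ring k)).restrictScalars k).comp E = AlgHom.id k _ := by
      apply rext <;> simp [E]
    have := congrArg (fun g => g r) this
    simpa [Polynomial.coeff_zero_eq_aeval_zero] using this
  have hψ0 : ∀ r, (ψ r).coeff 0 = r := by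
    intro r
    obtain ⟨r, rfl⟩ := Φ.surjective r
    rw [hψ, Polynomial.coeff_map, hE0]
    rfl
  have hψx : ψ (rx k) = Polynomial.C (rx k) := by
    conv_lhs => rw [← hΦ]
    rw [hψ]
    simp [E, hΦ]
  have hψt : ψ (Φ (rt k)) = Polynomial.C (Φ (rt k)) := by
    rw [hψ]; simp [E]
  have hψu : ψ (Φ (ru k)) = Polynomial.C (Φ (ru k)) + Polynomial.C (rx k) * Polynomial.X := by
    rw [hψ]; simp [E, hΦ]
  obtain ⟨N0, hN0⟩ := denom_poly (ψ (ru k))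
  obtain ⟨N1, hN1⟩ := denom_poly (ψ (rt k))
  obtain ⟨F0, hF00, hF0⟩ := lift_poly (ψ (ru k)) (X 0) (by rw [hψ0]; simp) (N0 + N1) (by
    intro i
    obtain ⟨s, hs⟩ := hN0 i
    exact ⟨sX ^ N1 * s, by simp only [map_mul, map_pow, jmap_x, ← hs]; ring⟩)
  obtain ⟨F1, hF10, hF1⟩ := lift_poly (ψ (rt k)) (X 1) (by rw [hψ0]; simp) (N0 + N1) (by
    intro i
    obtain ⟨s, hs⟩ := hN1 i
    exact ⟨sX ^ N0 * s, by simp only [map_mul, map_pow, jmap_x, ← hs]; ring⟩)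
  generalize N0 + N1 = N at *
  have hcomp : (Polynomial.mapRingHom (jmap (k := k))).comp (psi ![F0, F1])
      = ((sc (rx k ^ N)).comp (ψ : SL2Ring k →+* _)).comp jmap := by
    apply S_ext
    · intro a
      simp only [RingHom.comp_apply, psi_C, jmap_c, al, RingHom.coe_coe, AlgHom.commutes]
      simp [Polynomial.algebraMap_apply]
    · simp only [RingHom.comp_apply, jmap_x, RingHom.coe_coe, hψx]
      simp [sX]
      simp [jmap]
    · intro i
      fin_cases i
      · simp [hF0]
      · simp [hF1]
  have hcomp' : ∀ s, (psi ![F0, F1] s).map jmap = sc (rx k ^ N) (ψ (jmap s)) := by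
    intro s
    exact congrArg (fun g => g s) hcomp
  have hinj : Function.Injective (Polynomial.map (jmap (k := k))) :=
    Polynomial.map_injective _ jmap_inj
  have hfix : psi ![F0, F1] f = Polynomial.C f := by
    apply hinj
    rw [hcomp', ← hf]
    simp [hψx, hψt, ← hf]
  have hnt : ∃ l, (![F0, F1] : Fin 2 → Polynomial (S k)) l ≠ Polynomial.C (X l) := by
    by_contra! hcon
    have hC : psi ![F0, F1] = Polynomial.C := by
      apply MvPolynomial.ringHom_ext
      · simp
      · intro l
        rw [psi_X, hcon]
    obtain ⟨n', g, hg⟩ := denom (Φ (ru k))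
    have := hcomp' g
    rw [hC, ← hg] at this
    simp only [map_mul, map_pow, hψx, hψu] at this
    have h1 := congrArg (fun P => P.coeff 1) this
    simp only [sc_coeff, ← map_pow, ← map_mul, sc_C, Polynomial.coeff_C_mul, Polynomial.map_C] at h1
    simp [Polynomial.coeff_C] at h1
    apply nontriv (k := k)
    apply rx_pow_cancel (n' + 1 + N)
    rw [mul_zero, h1, mul_one]
    ring
  obtain ⟨Ψ, hΨ0, hΨf, l, hl⟩ := reduce ![F0, F1] (by
    intro l
    fin_cases l
    · exact hF00
    · exact hF10) hnt f hfix
  exact hl (deform_trivial Ψ hΨ0 _ hf0 hfd hΨf l)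

lemma preserves_u (Φ : SL2Ring k ≃ₐ[k] SL2Ring k) (hΦ : Φ (rx k) = rx k) :
    ∃ f : S k, Φ (ru k) = jmap f := by
  obtain ⟨f, hf⟩ := preserves_t (Φ * swapR) (by simp [hΦ])
  exact ⟨f, by simpa using hf⟩


/-! ### Part (b), forward direction -/

def evc (c : k) (hc : c ≠ 0) : SL2Ring k →ₐ[k] A k :=
  rlift (X 1) (X 0) (C c) (C c⁻¹ * (X 1 * X 0 + 1)) (by
    rw [← mul_assoc, ← C_mul, mul_inv_cancel₀ hc]; simp)

lemma evc_dvd (c : k) (hc : c ≠ 0) (r : SL2Ring k) (h : evc c hc r = 0) :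
    ∃ r', r = (rx k - al c) * r' := by
  let I : Ideal (SL2Ring k) := Ideal.span {rx k - al c}
  have hx : Ideal.Quotient.mk I (rx k) = Ideal.Quotient.mk I (al c) := by
    rw [Ideal.Quotient.eq]
    exact Ideal.subset_span rfl
  let sct : A k →ₐ[k] SL2Ring k := aeval ![ru k, rt k]
  have hC : ∀ a, sct (C a) = al a := by intro a; simp [sct]
  have e : (Ideal.Quotient.mkₐ k I).comp (sct.comp (evc c hc)) = Ideal.Quotient.mkₐ k I := by
    apply rext
    · simp [evc, sct]
    · simp [evc, sct]
    · simp only [evc, AlgHom.comp_apply, rlift_x, hC]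
      exact hx.symm
    · simp only [evc, AlgHom.comp_apply, rlift_y, hC, map_mul, map_add, map_one]
      have h0 : sct (X 0) = ru k := by simp [sct]
      have h1 : sct (X 1) = rt k := by simp [sct]
      rw [h0, h1]
      have hac : al c⁻¹ * al c = (1 : SL2Ring k) := by
        rw [al, al, ← map_mul, inv_mul_cancel₀ hc, map_one]
      refine (Ideal.Quotient.eq (I := I)).2 (Ideal.mem_span_singleton.2 ⟨al c⁻¹ * ry k, ?_⟩)
      linear_combination al c⁻¹ * (- rel k) + ry k * hac
  have e2 := congrArg (fun g => g r) e
  simp only [AlgHom.comp_apply, h, map_zero] at e2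
  have e3 : Ideal.Quotient.mk I r = 0 := e2.symm
  rw [Ideal.Quotient.eq_zero_iff_mem, Ideal.mem_span_singleton] at e3
  exact e3

lemma ev1_dvd (r : SL2Ring k) (h : rhoLamStar k 1 r = 0) : ∃ r', r = (rx k - 1) * r' := by
  have e : rhoLamStar k 1 = evc 1 one_ne_zero := by
    apply rext <;> simp [rho_t, rho_u, rho_x, rho_y, evc]
    ring
  rw [e] at h
  obtain ⟨r', hr⟩ := evc_dvd 1 one_ne_zero r h
  exact ⟨r', by simpa [al] using hr⟩

lemma no_zd {a b : SL2Ring k} (h : a * b = 0) : a = 0 ∨ b = 0 := by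
  obtain ⟨n, s, hs⟩ := denom a
  obtain ⟨m, r, hr⟩ := denom b
  have : s * r = 0 := by
    apply jmap_inj
    rw [map_mul, ← hs, ← hr, map_zero]
    linear_combination (rx k ^ n * rx k ^ m) * h
  rcases mul_eq_zero.1 this with rfl | rfl
  · left; apply rx_pow_cancel n; rw [hs]; simp
  · right; apply rx_pow_cancel m; rw [hr]; simp

lemma rx_sub_ne : rx k - 1 ≠ 0 := by
  intro h
  have : jmap (sX - 1 : S k) = jmap 0 := by simp [h]
  have := jmap_inj this
  have h2 := congrArg (evS (0 : k)) this
  simp at h2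

lemma unit_S {s : S k} (h : IsUnit s) : ∃ c : k, c ≠ 0 ∧ s = C (Polynomial.C c) := by
  obtain ⟨p, hp, rfl⟩ := MvPolynomial.isUnit_iff_eq_C_of_isReduced.1 h
  obtain ⟨c, hc, rfl⟩ := Polynomial.isUnit_iff.1 hp
  exact ⟨c, hc.ne_zero, rfl⟩

lemma unit_A {s : A k} (h : IsUnit s) : ∃ c : k, c ≠ 0 ∧ s = C c := by
  obtain ⟨p, hp, rfl⟩ := MvPolynomial.isUnit_iff_eq_C_of_isReduced.1 h
  exact ⟨p, hp.ne_zero, rfl⟩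

/-- A homomorphism killing `x`. -/
def killx : SL2Ring k →ₐ[k] LaurentPolynomial k :=
  rlift (LaurentPolynomial.T 1) (-LaurentPolynomial.T (-1)) 0 0 (by
    rw [mul_neg, ← LaurentPolynomial.T_add]; simp)

lemma killx_nt : ¬ IsUnit (rx k) := by
  intro h
  have := h.map (killx (k := k))
  simp [killx] at this

lemma unit_R {h h' : SL2Ring k} (e : h * h' = 1) : ∃ c : k, c ≠ 0 ∧ h = al c := by
  obtain ⟨n, s, hs⟩ := denom h
  obtain ⟨m, r, hr⟩ := denom h'
  have : s * r = sX ^ (n + m) := by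
    apply jmap_inj
    rw [map_mul, ← hs, ← hr, map_pow, jmap_x, pow_add]
    linear_combination (rx k ^ n * rx k ^ m) * e
  obtain ⟨i, hi, u, hu⟩ := (dvd_prime_pow sX_prime _).1 (Dvd.intro _ this)
  obtain ⟨c, hc, huc⟩ := unit_S (u⁻¹).isUnit
  have h1 : s = sX ^ i * C (Polynomial.C c) := by
    rw [← huc, ← hu]; simp
  rw [h1] at hs
  simp only [map_mul, map_pow, jmap_x, jmap_c] at hs
  have hac : al c * al c⁻¹ = (1 : SL2Ring k) := by
    rw [al, al, ← map_mul, mul_inv_cancel₀ hc, map_one]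
  rcases lt_trichotomy n i with hlt | rfl | hlt
  · exfalso
    obtain ⟨d, rfl⟩ := Nat.exists_eq_add_of_lt hlt
    have h2 : h = rx k * (rx k ^ d * al c) := by
      apply rx_pow_cancel n; rw [hs]; ring
    apply killx_nt (k := k)
    rw [h2] at e
    exact IsUnit.of_mul_eq_one (rx k ^ d * al c * h') (by rw [← e]; ring)
  · exact ⟨c, hc, rx_pow_cancel _ hs⟩
  · exfalso
    obtain ⟨d, rfl⟩ := Nat.exists_eq_add_of_lt hlt
    have h2 : rx k * (rx k ^ d * h) = al c := by
      apply rx_pow_cancel i; rw [← hs]; ring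
    apply killx_nt (k := k)
    exact IsUnit.of_mul_eq_one (rx k ^ d * h * al c⁻¹) (by rw [← hac, ← h2]; ring)

lemma rho_ker {l : k} (hl : l ≠ 0) (r : SL2Ring k) (h : rhoLamStar k l r = 0) :
    ∃ r', r = (rx k - 1) * r' := by
  apply ev1_dvd
  rw [rho_eq l hl] at h
  simpa using h

lemma fixes_x {l l' : k} (hl : l ≠ 0) (hl' : l' ≠ 0) (Φ : SL2Ring k ≃ₐ[k] SL2Ring k)
    (h : ∀ r, rhoLamStar k l' r = rhoLamStar k l (Φ r)) : Φ (rx k) = rx k := by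
  obtain ⟨a, ha⟩ := rho_ker hl (Φ (rx k) - 1) (by simp [← h, rho_x])
  obtain ⟨b, hb⟩ := rho_ker hl' (Φ.symm (rx k) - 1) (by simp [h, rho_x])
  have hab : a * Φ b = 1 := by
    have := congrArg Φ hb
    simp only [map_sub, map_mul, AlgEquiv.apply_symm_apply, map_one, ha] at this
    have h2 : (rx k - 1) * (a * Φ b - 1) = 0 := by linear_combination - this
    exact sub_eq_zero.1 ((no_zd h2).resolve_left rx_sub_ne)
  obtain ⟨m, hm, rfl⟩ := unit_R hab
  have hmm : al m * al m⁻¹ = (1 : SL2Ring k) := by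
    rw [al, al, ← map_mul, mul_inv_cancel₀ hm, map_one]
  by_cases hm1 : m = 1
  · rw [hm1] at ha
    simp [al] at ha
    exact ha
  exfalso
  have hc : 1 - m⁻¹ ≠ 0 := by
    intro h
    apply hm1
    rw [sub_eq_zero, eq_comm, inv_eq_one] at h
    exact h
  have hΦx : Φ (rx k) = al m * (rx k - al (1 - m⁻¹)) := by
    have : al (1 - m⁻¹) = (1 - al m⁻¹ : SL2Ring k) := by simp [al]
    rw [this]
    linear_combination ha - hmm
  have hev : evc _ hc (Φ (rx k)) = 0 := by
    rw [hΦx]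
    simp [evc, al, algebraMap_eq]
  have hrel : evc _ hc (Φ (rt k)) * (- evc _ hc (Φ (ru k))) = 1 := by
    have := congrArg (fun r => evc _ hc (Φ r)) (rel k)
    simp only [map_mul, map_add, map_one, hev] at this
    linear_combination this
  obtain ⟨a, ha0, ha⟩ := unit_A (IsUnit.of_mul_eq_one _ hrel)
  obtain ⟨r, hr⟩ := evc_dvd _ hc (Φ (rt k) - al a) (by
    rw [map_sub, ha, al, AlgHom.commutes, algebraMap_eq, sub_self])
  have h3 : rt k - al a = rx k * Φ.symm (al m⁻¹ * r) := by
    apply Φ.injective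
    rw [map_mul, AlgEquiv.apply_symm_apply, map_sub, al, AlgEquiv.commutes, hr, hΦx]
    linear_combination - (rx k - al (1 - m⁻¹)) * r * hmm
  have h4 := congrArg killx h3
  rw [map_sub, map_mul, al, AlgHom.commutes] at h4
  simp only [killx, rlift_t, rlift_x, zero_mul, sub_eq_zero] at h4
  have h5 : Polynomial.toLaurent (Polynomial.X : Polynomial k)
      = Polynomial.toLaurent (Polynomial.C a) := by
    rw [Polynomial.toLaurent_X, Polynomial.toLaurent_C, h4]
    rfl
  have h6 := congrArg Polynomial.natDegree (Polynomial.toLaurent_injective h5)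
  simp at h6


lemma descend (Φ : SL2Ring k ≃ₐ[k] SL2Ring k) (hΦ : Φ (rx k) = rx k) :
    ∃ φ : S k →ₐ[Polynomial k] S k, ∀ s, jmap (φ s) = Φ (jmap s) := by
  obtain ⟨f, hf⟩ := preserves_u Φ hΦ
  obtain ⟨g, hg⟩ := preserves_t Φ hΦ
  refine ⟨aeval ![f, g], ?_⟩
  have : (jmap (k := k)).comp ((aeval ![f, g] : S k →ₐ[Polynomial k] S k) : S k →+* S k)
      = (Φ : SL2Ring k →+* SL2Ring k).comp jmap := by
    apply S_ext
    · intro a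
      simp only [RingHom.comp_apply, RingHom.coe_coe, jmap_c, aeval_C, algebraMap_eq]
      exact (Φ.commutes a).symm
    · simp only [RingHom.comp_apply, RingHom.coe_coe, jmap_x, hΦ]
      simp only [sX, aeval_C, algebraMap_eq]
      exact jmap_x
    · intro i
      fin_cases i
      · simp [hf]
      · simp [hg]
  intro s
  exact congrArg (fun g => g s) this

lemma evS_pderiv (c : k) (i : Fin 2) (s : S k) : evS c (pderiv i s) = pderiv i (evS c s) := by
  simp [evS, pderiv_map]

def jac {B : Type*} [CommRing B] (p q : MvPolynomial (Fin 2) B) : MvPolynomial (Fin 2) B :=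
  pderiv 0 p * pderiv 1 q - pderiv 1 p * pderiv 0 q

lemma jac_unit {B : Type*} [CommRing B] (φ φ' : MvPolynomial (Fin 2) B →ₐ[B] MvPolynomial (Fin 2) B)
    (h : ∀ s, φ (φ' s) = s) : IsUnit (jac (φ (X 0)) (φ (X 1))) := by
  have hφ : φ = aeval (fun i => φ (X i)) := by
    apply MvPolynomial.algHom_ext; intro i; simp
  have hc : ∀ i j, pderiv i (X j : MvPolynomial (Fin 2) B)
      = φ (pderiv 0 (φ' (X j))) * pderiv i (φ (X 0)) + φ (pderiv 1 (φ' (X j))) * pderiv i (φ (X 1)) := by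
    intro i j
    have := chain (fun i => φ (X i)) (φ' (X j)) i
    rw [← hφ, h] at this
    exact this
  have h00 := hc 0 0
  have h01 := hc 0 1
  have h10 := hc 1 0
  have h11 := hc 1 1
  rw [pderiv_X_self] at h00 h11
  rw [pderiv_X_of_ne (by decide)] at h01 h10
  refine IsUnit.of_mul_eq_one (φ (pderiv 0 (φ' (X 0))) * φ (pderiv 1 (φ' (X 1)))
    - φ (pderiv 1 (φ' (X 0))) * φ (pderiv 0 (φ' (X 1)))) ?_
  unfold jac
  generalize φ (pderiv 0 (φ' (X 0))) = b00 at *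
  generalize φ (pderiv 1 (φ' (X 0))) = b01 at *
  generalize φ (pderiv 0 (φ' (X 1))) = b10 at *
  generalize φ (pderiv 1 (φ' (X 1))) = b11 at *
  generalize pderiv 0 (φ (X 0)) = a00 at *
  generalize pderiv 1 (φ (X 0)) = a01 at *
  generalize pderiv 0 (φ (X 1)) = a10 at *
  generalize pderiv 1 (φ (X 1)) = a11 at *
  linear_combination (-(b10 * a01 + b11 * a11)) * h00 - h11 + (b10 * a00 + b11 * a10) * h10

/-- Reduction modulo `x` of an endomorphism. -/
def red (φ : S k →ₐ[Polynomial k] S k) : A k →ₐ[k] A k := aeval (fun i => evS 0 (φ (X i)))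

lemma red_X (φ : S k →ₐ[Polynomial k] S k) (i) : red φ (X i) = evS 0 (φ (X i)) := by simp [red]

lemma red_ev (φ : S k →ₐ[Polynomial k] S k) (s : S k) : red φ (evS 0 s) = evS 0 (φ s) := by
  have : (red φ : A k →+* A k).comp (evS 0) = (evS 0).comp (φ : S k →+* S k) := by
    apply MvPolynomial.ringHom_ext
    · intro p
      have h : φ (C p) = C p := φ.commutes p
      simp [h, red]
    · intro i
      simp [red]
  exact congrArg (fun g => g s) this

lemma evS_surj (p : A k) : ∃ s : S k, evS 0 s = p := by
  refine ⟨map Polynomial.C p, ?_⟩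
  have : (evS (0 : k)).comp (map Polynomial.C) = RingHom.id _ := by
    apply MvPolynomial.ringHom_ext <;> simp
  exact congrArg (fun g => g p) this

lemma red_inv (φ φ' : S k →ₐ[Polynomial k] S k) (h : ∀ s, φ (φ' s) = s) (p : A k) :
    red φ (red φ' p) = p := by
  obtain ⟨s, rfl⟩ := evS_surj p
  rw [red_ev, red_ev, h]

lemma red_dvd (Φ : SL2Ring k ≃ₐ[k] SL2Ring k) (hΦ : Φ (rx k) = rx k)
    (φ : S k →ₐ[Polynomial k] S k) (h : ∀ s, jmap (φ s) = Φ (jmap s)) :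
    (X 0 * X 1 + 1 : A k) ∣ red φ (X 0 * X 1 + 1) := by
  have h1 : (X 0 * X 1 + 1 : A k) = evS 0 (X 0 * X 1 + 1) := by simp
  have h2 : red φ (X 0 * X 1 + 1) = evS 0 (φ (X 0 * X 1 + 1)) := by
    rw [h1, red_ev]
  rw [h2]
  apply dvd_of_mem _ (Φ (ry k))
  rw [h]
  have : jmap (X 0 * X 1 + 1 : S k) = rx k * ry k := by
    simp [rel]; ring
  rw [this, map_mul, hΦ]

lemma plane (φ φ' : A k →ₐ[k] A k) (h : ∀ p, φ (φ' p) = p) (h' : ∀ p, φ' (φ p) = p)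
    (hd : (X 0 * X 1 + 1 : A k) ∣ φ (X 0 * X 1 + 1))
    (hd' : (X 0 * X 1 + 1 : A k) ∣ φ' (X 0 * X 1 + 1)) (c : k)
    (hc : jac (φ (X 0)) (φ (X 1)) = C c) : c = 1 ∨ c = -1 := by
  obtain ⟨a, ha⟩ := hd
  obtain ⟨b, hb⟩ := hd'
  have hw : (X 0 * X 1 + 1 : A k) ≠ 0 := by
    intro h
    have := congrArg constantCoeff h
    simp at this
  have hab : a * φ b = 1 := by
    have := h (X 0 * X 1 + 1)
    rw [hb, map_mul, ha, mul_assoc] at this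
    exact mul_left_cancel₀ hw (by rw [this, mul_one])
  obtain ⟨m, hm, rfl⟩ := unit_A (IsUnit.of_mul_eq_one _ hab)
  rw [map_add, map_mul, map_one] at ha
  let p : Fin 2 → k := fun i => constantCoeff (φ' (X i))
  have hp : ∀ q, eval p q = constantCoeff (φ' q) := by
    intro q
    have : (eval p) = (constantCoeff).comp (φ' : A k →+* A k) := by
      apply MvPolynomial.ringHom_ext
      · intro a
        have : φ' (C a) = C a := φ'.commutes a
        simp [this]
      · intro i
        simp [p]
    exact congrArg (fun g => g q) this
  have hP : eval p (φ (X 0)) = 0 := by rw [hp, h']; simp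
  have hQ : eval p (φ (X 1)) = 0 := by rw [hp, h']; simp
  generalize φ (X 0) = P at *
  generalize φ (X 1) = Q at *
  have d0 := congrArg (fun q => eval p (pderiv 0 q)) ha
  have d1 := congrArg (fun q => eval p (pderiv 1 q)) ha
  simp only [map_add, Derivation.leibniz, pderiv_one, pderiv_C, pderiv_X_self, smul_eq_mul,
    pderiv_X_of_ne (show (1 : Fin 2) ≠ 0 by decide), pderiv_X_of_ne (show (0 : Fin 2) ≠ 1 by decide),
    map_mul, hP, hQ, map_zero, eval_X, eval_C, map_one] at d0 d1
  have p1 : p 1 = 0 := by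
    have : m * p 1 = 0 := by linear_combination - d0
    exact (mul_eq_zero.1 this).resolve_left hm
  have p0 : p 0 = 0 := by
    have : m * p 0 = 0 := by linear_combination - d1
    exact (mul_eq_zero.1 this).resolve_left hm
  have hm1 : m = 1 := by
    have := congrArg (eval p) ha
    simp [hP, hQ, p0, p1] at this
    exact this.symm
  have hPQ : P * Q = X 0 * X 1 := by
    rw [hm1] at ha
    simp only [map_one, mul_one] at ha
    exact add_right_cancel ha
  have hJ := congrArg (eval p) hc
  simp only [jac, map_sub, map_mul, eval_C] at hJ
  have hX0 : Prime (X 0 : A k) := X_prime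
  rcases hX0.dvd_or_dvd (Dvd.intro _ hPQ.symm) with ⟨P1, rfl⟩ | ⟨Q1, rfl⟩
  · left
    have e : P1 * Q = X 1 := by
      apply mul_left_cancel₀ (X_ne_zero (R := k) (0 : Fin 2)); rw [← hPQ]; ring
    have e1 := congrArg (fun q => eval p (pderiv 1 q)) e
    simp only [Derivation.leibniz, smul_eq_mul, map_add, map_mul, hQ, pderiv_X_self, map_one] at e1
    simp only [Derivation.leibniz, smul_eq_mul, map_add, map_mul, pderiv_X_self, map_one, eval_X, p0,
      pderiv_X_of_ne (show (0 : Fin 2) ≠ 1 by decide), map_zero] at hJ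
    linear_combination e1 - hJ
  · right
    have e : P * Q1 = X 1 := by
      apply mul_left_cancel₀ (X_ne_zero (R := k) (0 : Fin 2)); rw [← hPQ]; ring
    have e1 := congrArg (fun q => eval p (pderiv 1 q)) e
    simp only [Derivation.leibniz, smul_eq_mul, map_add, map_mul, hP, pderiv_X_self, map_one] at e1
    simp only [Derivation.leibniz, smul_eq_mul, map_add, map_mul, pderiv_X_self, map_one, eval_X, p0,
      pderiv_X_of_ne (show (0 : Fin 2) ≠ 1 by decide), map_zero] at hJ
    linear_combination - e1 - hJ

lemma rho_jmap (s : S k) : rhoLamStar k 1 (jmap s) = evS 1 s := by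
  have : (rhoLamStar k 1 : SL2Ring k →+* A k).comp jmap = evS 1 := by
    apply S_ext
    · intro a
      simp only [RingHom.comp_apply, RingHom.coe_coe, jmap_c, al, AlgHom.commutes]
      simp [algebraMap_eq]
    · simp [rho_x]
    · intro i
      fin_cases i <;> simp [rho_t, rho_u]
  exact congrArg (fun g => g s) this

lemma partB_hard {l l' : k} (hl : l ≠ 0) (hl' : l' ≠ 0) (Φ : SL2Ring k ≃ₐ[k] SL2Ring k)
    (h : ∀ r, rhoLamStar k l' r = rhoLamStar k l (Φ r)) : l' = l ∨ l' = -l := by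
  have hx := fixes_x hl hl' Φ h
  have hx' : Φ.symm (rx k) = rx k := by
    rw [AlgEquiv.symm_apply_eq, hx]
  obtain ⟨φ, hφ⟩ := descend Φ hx
  obtain ⟨φ', hφ'⟩ := descend Φ.symm hx'
  have i1 : ∀ s, φ (φ' s) = s := by
    intro s; apply jmap_inj; rw [hφ, hφ']; simp
  have i2 : ∀ s, φ' (φ s) = s := by
    intro s; apply jmap_inj; rw [hφ', hφ]; simp
  obtain ⟨c, hc, hJ⟩ := unit_S (jac_unit φ φ' i1)
  have ev : ∀ d, jac (evS d (φ (X 0))) (evS d (φ (X 1))) = C c := by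
    intro d
    have := congrArg (evS d) hJ
    simpa [jac, evS_pderiv] using this
  have hc1 : c = 1 ∨ c = -1 := by
    apply plane (red φ) (red φ') (red_inv _ _ i1) (red_inv _ _ i2) (red_dvd Φ hx φ hφ)
      (red_dvd Φ.symm hx' φ' hφ')
    rw [red_X, red_X]
    exact ev 0
  have hsc : ∀ s, rhoLamStar k l' (jmap s) = scaleA l hl (evS 1 (φ s)) := by
    intro s
    rw [h, ← hφ, rho_eq l hl, ← rho_jmap]
    rfl
  have e1 : evS 1 (φ (X 1)) = X 1 := by
    apply (scaleA l hl).injective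
    rw [← hsc]
    simp [rho_t]
  have e0 : evS 1 (φ (X 0)) = C (l' / l) * X 0 := by
    apply (scaleA l hl).injective
    rw [← hsc, map_mul, map_C', scaleA_0, ← mul_assoc, ← C_mul, div_mul_cancel₀ _ hl]
    simp [rho_u]
  have e2 := ev 1
  rw [e0, e1] at e2
  have e3 := congrArg constantCoeff e2
  simp [jac, pderiv_X_of_ne (show (0 : Fin 2) ≠ 1 by decide)] at e3
  have e4 : l' = c * l := by rw [← e3, div_mul_cancel₀ _ hl]
  rcases hc1 with rfl | rfl
  · left; rw [e4, one_mul]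
  · right; rw [e4]; ring


end SL2Emb

/-- **Theorem 2(1) (Blanc–van Santen).** (a) Every closed embedding `𝔸² ↪ SL₂` with image
`ρ₁(𝔸²)` is equivalent to `ρ_λ` for some `λ ∈ k*`; (b) `ρ_λ` and `ρ_{λ'}` are equivalent iff
`λ' = ±λ`. -/
theorem embeddings_with_standard_image
    (k : Type*) [Field k] :
    (∀ σ : SL2Ring k →ₐ[k] MvPolynomial (Fin 2) k, Function.Surjective σ →
        RingHom.ker σ = RingHom.ker (rhoLamStar k 1) →
        ∃ lam : k, lam ≠ 0 ∧ ∃ Φ : SL2Ring k ≃ₐ[k] SL2Ring k,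
          σ = (rhoLamStar k lam).comp Φ.toAlgHom) ∧
    (∀ lam lam' : k, lam ≠ 0 → lam' ≠ 0 →
        ((∃ Φ : SL2Ring k ≃ₐ[k] SL2Ring k,
            rhoLamStar k lam' = (rhoLamStar k lam).comp Φ.toAlgHom) ↔
          (lam' = lam ∨ lam' = -lam))) := by
  refine ⟨SL2Emb.partA, fun lam lam' h h' => ⟨?_, ?_⟩⟩
  · rintro ⟨Φ, hΦ⟩
    exact SL2Emb.partB_hard h h' Φ (fun r => by rw [hΦ]; rfl)
  · rintro (rfl | rfl)
    · exact ⟨AlgEquiv.refl, by ext r; rfl⟩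
    · exact SL2Emb.partB_easy lam h
end
end

section
/- Let k be any field and A = k[X,Y,Z]/(XY − Z(Z+1)) the coordinate ring of the smooth quadric Q₂. For every polynomial p ∈ k[t], the assignment X ↦ t·(1 + t·p(t)), Y ↦ p(t), Z ↦ t·p(t) sends XY − Z(Z+1) to 0 and hence induces a k-algebra homomorphism ν_p : A → k[t]; moreover ν_p is surjective. (Equivalently, the morphism ν_p : 𝔸¹ → Q₂, t ↦ (t(1+t·p(t)), p(t), t·p(t)), is a closed embedding.) -/
open MvPolynomial

noncomputable section

/-- The polynomial `X*Y - Z*(Z+1)` defining the smooth quadric `Q₂` inside `𝔸³`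
(variables: `0 = X`, `1 = Y`, `2 = Z`). -/
def q2Rel (k : Type*) [Field k] : MvPolynomial (Fin 3) k := X 0 * X 1 - X 2 * (X 2 + 1)

/-- The coordinate ring `A = k[X,Y,Z]/(XY - Z(Z+1))` of the smooth quadric `Q₂`. -/
abbrev Q2Ring (k : Type*) [Field k] : Type _ := MvPolynomial (Fin 3) k ⧸ Ideal.span {q2Rel k}

/-- The `k`-algebra map `k[X,Y,Z] → k[t]` given by
`X ↦ t(1 + t·p(t))`, `Y ↦ p(t)`, `Z ↦ t·p(t)`. -/
def nuAux (k : Type*) [Field k] (p : Polynomial k) :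
    MvPolynomial (Fin 3) k →ₐ[k] Polynomial k :=
  aeval ![Polynomial.X * (1 + Polynomial.X * p), p, Polynomial.X * p]

/-- A subalgebra of `k[t]` containing `t(1+tp)`, `p` and `tp` contains `t`. -/
theorem X_mem_of_mem (k : Type*) [Field k] (p : Polynomial k)
    (B : Subalgebra k (Polynomial k))
    (hx : Polynomial.X * (1 + Polynomial.X * p) ∈ B) (hy : p ∈ B)
    (hz : Polynomial.X * p ∈ B) : (Polynomial.X : Polynomial k) ∈ B := by
  by_cases hd : p.natDegree = 0
  · obtain ⟨a, rfl⟩ := Polynomial.natDegree_eq_zero.mp hd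
    by_cases ha : a = 0
    · simpa [ha] using hx
    · have h := B.smul_mem hz a⁻¹
      rwa [mul_comm, ← Polynomial.smul_eq_C_mul, smul_smul, inv_mul_cancel₀ ha, one_smul] at h
  have hp : p ≠ 0 := by
    rintro rfl
    simp at hd
  have hlc : p.leadingCoeff ≠ 0 := Polynomial.leadingCoeff_ne_zero.mpr hp
  -- `t` is integral over `B`
  have hX : IsIntegral B (Polynomial.X : Polynomial k) := by
    refine IsIntegral.of_aeval_monic
      (p := (p * Polynomial.C p.leadingCoeff⁻¹).map (algebraMap k B))
      ((Polynomial.monic_mul_leadingCoeff_inv hp).map _) ?_ ?_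
    · rw [Polynomial.natDegree_map, Polynomial.natDegree_mul_C (inv_ne_zero hlc)]
      exact hd
    · rw [Polynomial.aeval_map_algebraMap, Polynomial.aeval_X_left_apply]
      have hm : p * Polynomial.C p.leadingCoeff⁻¹ ∈ B :=
        B.mul_mem hy (B.algebraMap_mem _)
      exact isIntegral_algebraMap (R := B) (x := ⟨_, hm⟩)
  have hint : (algebraMap B (Polynomial k)).IsIntegral := by
    intro f
    change IsIntegral B f
    induction f using Polynomial.induction_on' with
    | add f g hf hg => exact hf.add hg
    | monomial n a =>
      rw [← Polynomial.C_mul_X_pow_eq_monomial]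
      exact (isIntegral_algebraMap (R := B) (x := algebraMap k B a)).mul (hX.pow n)
  -- the ideal `(p, 1 + tp)` of `B` is the unit ideal, by lying over
  let y : B := ⟨p, hy⟩
  let w : B := ⟨1 + Polynomial.X * p, B.add_mem B.one_mem hz⟩
  have htop : Ideal.span {y, w} = ⊤ := by
    rw [← Ideal.map_eq_top_iff (algebraMap B (Polynomial k)) Subtype.val_injective hint,
      Ideal.map_span, Set.image_pair, Ideal.eq_top_iff_one, Ideal.mem_span_pair]
    refine ⟨-Polynomial.X, 1, ?_⟩
    change -Polynomial.X * p + 1 * (1 + Polynomial.X * p) = 1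
    ring
  rw [Ideal.eq_top_iff_one, Ideal.mem_span_pair] at htop
  obtain ⟨b, c, hbc⟩ := htop
  have h1 : (b : Polynomial k) * p + (c : Polynomial k) * (1 + Polynomial.X * p) = 1 :=
    congrArg Subtype.val hbc
  have h2 : (Polynomial.X : Polynomial k)
      = (b : Polynomial k) * (Polynomial.X * p) + (c : Polynomial k) * (Polynomial.X * (1 + Polynomial.X * p)) := by
    linear_combination (-Polynomial.X) * h1
  rw [h2]
  exact B.add_mem (B.mul_mem b.2 hz) (B.mul_mem c.2 hx)

/-- **Lemma 2.2(1) (Blanc–van Santen).** For every `p ∈ k[t]`, the assignment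
`X ↦ t(1+t·p(t))`, `Y ↦ p(t)`, `Z ↦ t·p(t)` kills the relation `XY − Z(Z+1)`, hence induces
a `k`-algebra homomorphism `ν_p : A → k[t]`, and `ν_p` is surjective: that is,
`ν_p : 𝔸¹ → Q₂`, `t ↦ (t(1+tp(t)), p(t), tp(t))`, is a closed embedding. -/
theorem nu_p_closed_embedding (k : Type*) [Field k] (p : Polynomial k) :
    nuAux k p (q2Rel k) = 0 ∧
    ∃ ν : Q2Ring k →ₐ[k] Polynomial k,
      ν.comp (Ideal.Quotient.mkₐ k (Ideal.span {q2Rel k})) = nuAux k p ∧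
      Function.Surjective ν := by
  have h0 : nuAux k p (q2Rel k) = 0 := by
    simp [nuAux, q2Rel]
    ring
  refine ⟨h0, Ideal.Quotient.liftₐ _ (nuAux k p) ?_, ?_, ?_⟩
  · intro a ha
    have hle : Ideal.span {q2Rel k} ≤ RingHom.ker (nuAux k p) := by
      rw [Ideal.span_le, Set.singleton_subset_iff]
      exact h0
    exact hle ha
  · ext i
    rfl
  · have hX : (Polynomial.X : Polynomial k) ∈ (nuAux k p).range := by
      apply X_mem_of_mem k p
      · exact ⟨X 0, by simp [nuAux]⟩
      · exact ⟨X 1, by simp [nuAux]⟩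
      · exact ⟨X 2, by simp [nuAux]⟩
    obtain ⟨g, hg⟩ := hX
    intro f
    refine ⟨Ideal.Quotient.mk _ (Polynomial.aeval g f), ?_⟩
    change nuAux k p (Polynomial.aeval g f) = f
    have hg' : nuAux k p g = Polynomial.X := hg
    rw [← Polynomial.aeval_algHom_apply, hg', Polynomial.aeval_X_left_apply]
end
end

section
/- Let k be any field, A = k[X,Y,Z]/(XY − Z(Z+1)), and for p ∈ k[t] let ν_p : A → k[t] be the surjective k-algebra homomorphism with X ↦ t(1 + t·p(t)), Y ↦ p(t), Z ↦ t·p(t). Let p, q ∈ k[t] be polynomials of degree ≥ 3 and suppose there exist a k-algebra automorphism α of A and a k-algebra automorphism β of k[t] such that ν_p ∘ α = β ∘ ν_q. Then there exist μ ∈ k and λ ∈ k* such that p(t) = λ·q(λt + μ), β(t) = λt + μ, and α acts on the classes of the generators by X ↦ λX + (μ²/λ)Y + 2μZ + μ, Y ↦ (1/λ)Y, Z ↦ Z + (μ/λ)Y. -/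
open MvPolynomial

noncomputable section

/-- The class of `X` in `A`. -/
def q2X (k : Type*) [Field k] : Q2Ring k := Ideal.Quotient.mk (Ideal.span {q2Rel k}) (X 0)

/-- The class of `Y` in `A`. -/
def q2Y (k : Type*) [Field k] : Q2Ring k := Ideal.Quotient.mk (Ideal.span {q2Rel k}) (X 1)

/-- The class of `Z` in `A`. -/
def q2Z (k : Type*) [Field k] : Q2Ring k := Ideal.Quotient.mk (Ideal.span {q2Rel k}) (X 2)

namespace Q2Aux
/-- coefficientwise derivation -/
def coeffDer {F K : Type*} [Field F] [Field K] [Algebra F K] (d : Derivation F K K) :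
    Derivation F (Polynomial K) (Polynomial K) :=
  (PolynomialModule.equivPolynomialSelf (R := K)).toLinearMap.compDer d.mapCoeffs

lemma coeff_coeffDer {F K : Type*} [Field F] [Field K] [Algebra F K] (d : Derivation F K K)
    (P : Polynomial K) (i : ℕ) : (coeffDer d P).coeff i = d (P.coeff i) := rfl

lemma coeffDer_C {F K : Type*} [Field F] [Field K] [Algebra F K] (d : Derivation F K K)
    (a : K) : coeffDer d (Polynomial.C a) = Polynomial.C (d a) := by
  ext i
  rw [coeff_coeffDer, Polynomial.coeff_C, Polynomial.coeff_C]
  split_ifs <;> simp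

lemma natDegree_zero_of_pow_mul {K : Type*} [Field K] {v r : Polynomial K} {c : K} {n : ℕ}
    (hn : n ≠ 0) (hc : c ≠ 0) (h : v ^ n * r = Polynomial.C c) : v.natDegree = 0 := by
  have h1 : IsUnit (v ^ n * r) := by
    rw [h]; exact Polynomial.isUnit_C.mpr (isUnit_iff_ne_zero.mpr hc)
  have h2 : IsUnit v := (isUnit_pow_iff hn).mp (isUnit_of_mul_isUnit_left h1)
  exact Polynomial.natDegree_eq_zero_of_isUnit h2

lemma natDegree_zero_of_pow_eq_C {K : Type*} [Field K] {v : Polynomial K} {c : K} {n : ℕ}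
    (hn : n ≠ 0) (h : v ^ n = Polynomial.C c) : v.natDegree = 0 := by
  have := congrArg Polynomial.natDegree h
  rw [Polynomial.natDegree_pow, Polynomial.natDegree_C] at this
  simpa [hn] using this

lemma lemE1 {F K : Type*} [Field F] [Field K] [Algebra F K] (d : Derivation F K K)
    {w : K} (hw : w ≠ 0) (hd : d w = 1) {a b : F} (ha : a ≠ 0) (hb : b ≠ 0) {A B : ℕ}
    (hA0 : A ≠ 0)
    (hA : (A : K) = 0) (hB : (B : K) ≠ 0) (hB2 : 2 ≤ B) {u v : Polynomial K} {γ : K}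
    (hv : v.coeff 0 = w)
    (h : Polynomial.C (algebraMap F K a) * v ^ B + Polynomial.C (algebraMap F K b) * u ^ A
      = Polynomial.C γ) : u.natDegree = 0 ∧ v.natDegree = 0 := by
  have haK : algebraMap F K a ≠ 0 := by simpa using ha
  have hbK : algebraMap F K b ≠ 0 := by simpa using hb
  have h1 := congrArg (coeffDer d) h
  have hAp : (A : Polynomial K) = 0 := by
    rw [← Polynomial.C_eq_natCast, hA, Polynomial.C_0]
  rw [map_add, Derivation.leibniz, Derivation.leibniz, Derivation.leibniz_pow,
    Derivation.leibniz_pow, coeffDer_C, coeffDer_C, coeffDer_C] at h1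
  simp only [Derivation.map_algebraMap, Polynomial.C_0, add_zero,
    smul_eq_mul, nsmul_eq_mul, hAp, zero_mul, mul_zero] at h1
  have h2 := congrArg (Polynomial.eval 0) h1
  simp only [Polynomial.eval_mul, Polynomial.eval_C, Polynomial.eval_pow,
    Polynomial.eval_natCast] at h2
  rw [← Polynomial.coeff_zero_eq_eval_zero, ← Polynomial.coeff_zero_eq_eval_zero,
    coeff_coeffDer, hv, hd, mul_one] at h2
  have hγ : d γ ≠ 0 := by
    rw [← h2]
    exact mul_ne_zero haK (mul_ne_zero hB (pow_ne_zero _ hw))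
  have hvd : v.natDegree = 0 := by
    apply natDegree_zero_of_pow_mul (n := B - 1) (c := d γ)
      (r := Polynomial.C (algebraMap F K a) * ((B : Polynomial K) * coeffDer d v)) (by omega) hγ
    rw [← h1]; ring
  refine ⟨?_, hvd⟩
  rw [Polynomial.eq_C_of_natDegree_eq_zero hvd] at h
  apply natDegree_zero_of_pow_eq_C hA0
    (c := (algebraMap F K b)⁻¹ * (γ - algebraMap F K a * (v.coeff 0) ^ B))
  rw [Polynomial.C_mul, Polynomial.C_sub, ← h, Polynomial.C_mul, Polynomial.C_pow]
  rw [add_sub_cancel_left, ← mul_assoc, ← Polynomial.C_mul, inv_mul_cancel₀ hbK]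
  simp

lemma lemE {F K : Type*} [Field F] [IsAlgClosed F] [Field K] [Algebra F K] (d : Derivation F K K)
    {w : K} (hw : w ≠ 0) (hd : d w = 1) {ρ : F} (hρ : ρ ≠ 0) {m : ℕ} (hm : 3 ≤ m)
    {u v : Polynomial K} {γ : K} (hγ : γ ≠ 0)
    (hu : u.coeff 0 = w) (hv : v.coeff 0 = w)
    (h : v ^ (m + 2) - Polynomial.C (algebraMap F K ρ) * u ^ m = Polynomial.C γ) :
    u.natDegree = 0 ∧ v.natDegree = 0 := by
  classical
  have hρK : algebraMap F K ρ ≠ 0 := by simpa using hρ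
  have hu0 : u ≠ 0 := by rintro rfl; simp at hu; exact hw hu.symm
  have hv0 : v ≠ 0 := by rintro rfl; simp at hv; exact hw hv.symm
  have h' : Polynomial.C (algebraMap F K 1) * v ^ (m+2)
      + Polynomial.C (algebraMap F K (-ρ)) * u ^ m = Polynomial.C γ := by
    rw [← h]; simp; ring
  by_cases h1 : (m : K) = 0
  · by_cases h2 : ((m + 2 : ℕ) : K) = 0
    · -- characteristic two
      have h20 : (2 : K) = 0 := by
        push_cast at h2; rwa [h1, zero_add] at h2
      have hch : CharP K 2 := CharTwo.of_one_ne_zero_of_two_eq_zero one_ne_zero h20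
      obtain ⟨m', hm'⟩ : 2 ∣ m := (CharP.cast_eq_zero_iff K 2 m).mp h1
      obtain ⟨r, hr⟩ := IsAlgClosed.exists_pow_nat_eq ρ (n := 2) (by norm_num)
      have hr0 : r ≠ 0 := by rintro rfl; simp at hr; exact hρ hr.symm
      have hsq : (v ^ (m'+1) + Polynomial.C (algebraMap F K r) * u ^ m') ^ 2 = Polynomial.C γ := by
        have e2 : (2 : Polynomial K) = 0 := by
          rw [← Polynomial.C_ofNat, h20, Polynomial.C_0]
        rw [← h, ← hr, hm', map_pow, Polynomial.C_pow]
        linear_combination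
          (v ^ (m'+1) * Polynomial.C (algebraMap F K r) * u ^ m'
            + (Polynomial.C (algebraMap F K r))^2 * u ^(2*m')) * e2
      have hdeg := natDegree_zero_of_pow_eq_C (by norm_num) hsq
      obtain ⟨c, hC⟩ : ∃ c, v ^ (m'+1) + Polynomial.C (algebraMap F K r) * u ^ m' = Polynomial.C c :=
        ⟨_, Polynomial.eq_C_of_natDegree_eq_zero hdeg⟩
      by_cases hme : (m' : K) = 0
      · exact lemE1 d hw hd (γ := c) (a := 1) (b := r) one_ne_zero hr0 (A := m') (B := m'+1) (by omega) hme
          (by push_cast; rw [hme]; simp) (by omega) hv (by rw [map_one (algebraMap F K), Polynomial.C_1, one_mul]; exact hC)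
      · have : ((m' + 1 : ℕ) : K) = 0 := by
          rw [CharP.cast_eq_zero_iff K 2] at hme ⊢; omega
        exact (lemE1 d hw hd (γ := c) (b := 1) (a := r) hr0 one_ne_zero (B := m') (A := m'+1) (by omega) this
          hme (by omega) hu (by rw [map_one (algebraMap F K), Polynomial.C_1, one_mul, add_comm]; exact hC)).symm
    · exact lemE1 d hw hd one_ne_zero (neg_ne_zero.mpr hρ) (by omega) h1 h2 (by omega) hv h'
  · by_cases h2 : ((m + 2 : ℕ) : K) = 0
    · rw [add_comm] at h'
      exact (lemE1 d hw hd (neg_ne_zero.mpr hρ) one_ne_zero (by omega) h2 h1 (by omega) hu h').symm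
    · have hcop : IsCoprime v u := by
        have : IsCoprime (v ^ (m+2)) (u ^ m) := by
          refine ⟨Polynomial.C γ⁻¹, - Polynomial.C γ⁻¹ * Polynomial.C (algebraMap F K ρ), ?_⟩
          have : Polynomial.C γ⁻¹ * Polynomial.C γ = 1 := by
            rw [← Polynomial.C_mul, inv_mul_cancel₀ hγ, Polynomial.C_1]
          rw [← this, ← h]; ring
        exact (IsCoprime.pow_iff (by omega) (by omega)).mp this
      have := Polynomial.flt_catalan (p := m+2) (q := m) (r := m * (m+2)) (by omega) (by omega)
        (by positivity) (by nlinarith [Nat.mul_le_mul hm hm, Nat.zero_le (m*(m+2))]) h2 h1 (by rw [Nat.cast_mul]; exact mul_ne_zero h1 h2)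
        hv0 hu0 one_ne_zero hcop (u := 1) (v := -(algebraMap F K ρ)) (w := -γ) one_ne_zero
        (neg_ne_zero.mpr hρK) (neg_ne_zero.mpr hγ)
        (by rw [one_pow, mul_one, Polynomial.C_neg, Polynomial.C_neg, ← h, Polynomial.C_1]; ring)
      exact ⟨this.2.1, this.1⟩

lemma exists_der (F : Type*) [Field F] :
    ∃ d : Derivation F (FractionRing (Polynomial F)) (FractionRing (Polynomial F)),
      d (algebraMap (Polynomial F) _ Polynomial.X) = 1 := by
  let K := FractionRing (Polynomial F)
  let w : K := algebraMap (Polynomial F) K Polynomial.X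
  let g : Polynomial F →ₐ[F] DualNumber K :=
    Polynomial.aeval (algebraMap K (DualNumber K) w + DualNumber.eps)
  have hfst : ∀ P, (g P).fst = algebraMap (Polynomial F) K P := by
    intro P
    have : (TrivSqZeroExt.fstHom F K K).comp g = IsScalarTower.toAlgHom F (Polynomial F) K := by
      apply Polynomial.algHom_ext
      simp [g, w, TrivSqZeroExt.algebraMap_eq_inl]
    exact DFunLike.congr_fun this P
  have hunit : ∀ y : nonZeroDivisors (Polynomial F), IsUnit (g y) := by
    intro y
    rw [TrivSqZeroExt.isUnit_iff_isUnit_fst, hfst]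
    exact IsLocalization.map_units K y
  let θ : K →ₐ[F] DualNumber K := IsLocalization.liftAlgHom (M := nonZeroDivisors (Polynomial F)) (f := g) hunit
  have hθ : ∀ P, θ (algebraMap (Polynomial F) K P) = g P := by
    intro P
    simp [θ]
  have hfst2 : ∀ a, (θ a).fst = a := by
    intro a
    have : (TrivSqZeroExt.fstHom F K K).comp θ = AlgHom.id F K := by
      apply IsLocalization.algHom_ext (nonZeroDivisors (Polynomial F))
      apply Polynomial.algHom_ext
      change (θ (algebraMap (Polynomial F) K Polynomial.X)).fst =
        algebraMap (Polynomial F) K Polynomial.X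
      rw [hθ, hfst]
    exact DFunLike.congr_fun this a
  refine ⟨Derivation.mk' ((TrivSqZeroExt.sndHom K K).restrictScalars F ∘ₗ θ.toLinearMap) ?_, ?_⟩
  · intro a b
    simp [hfst2, mul_comm]
  · change (θ (algebraMap (Polynomial F) K Polynomial.X)).snd = 1
    rw [hθ]
    simp [g, TrivSqZeroExt.algebraMap_eq_inl, w]

end Q2Aux

namespace Q2Aux

lemma ring_aux {R : Type*} [CommRing R] (c A U2 B V1 R1 U1 : R) :
    c * (A * U2 * (B * V1)) - (c * R1) * (A * B * (U1 * U2))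
      = c * (A * B * ((V1 - R1 * U1) * U2)) := by ring

lemma core2 {F K : Type*} [Field F] [IsAlgClosed F] [Field K] [Algebra F K] (d : Derivation F K K)
    {w : K} (hw : w ≠ 0) (hd : d w = 1) {m : ℕ} (hm : 3 ≤ m)
    {u v : Polynomial K} {γ : K} (hγ : γ ≠ 0)
    (hu : u.coeff 0 = w) (hv : v.coeff 0 = w)
    (hnc : ¬ (u.natDegree = 0 ∧ v.natDegree = 0))
    (S : Finset (ℕ × ℕ × Fin 2)) (c : ℕ × ℕ × Fin 2 → F) (hc : ∀ M ∈ S, c M ≠ 0)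
    (hS : S.Nonempty) {W : ℕ}
    (hW : ∀ M ∈ S, (m + 2) * M.1 + m * M.2.1 + (m + 1) * (M.2.2 : ℕ) = W)
    (h : ∑ M ∈ S, Polynomial.C (algebraMap F K (c M)) *
      (u ^ (2 * M.1 + (M.2.2 : ℕ)) * v ^ (2 * M.2.1 + (M.2.2 : ℕ))) = Polynomial.C γ) :
    ∃ M0, S = {M0} ∧ (M0.2.2 : ℕ) = 0 ∧ (M0.1 = 0 ∨ M0.2.1 = 0) := by
  classical
  let δ : ℕ × ℕ × Fin 2 → ℕ := fun M => M.1 + M.2.1 + (M.2.2 : ℕ)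
  let a : ℕ × ℕ × Fin 2 → ℕ := fun M => 2 * M.1 + (M.2.2 : ℕ)
  let b : ℕ × ℕ × Fin 2 → ℕ := fun M => 2 * M.2.1 + (M.2.2 : ℕ)
  have hab : ∀ M, a M + b M = 2 * δ M := fun M => by simp only [a, b, δ]; ring
  have hWa : ∀ M ∈ S, m * δ M + a M = W := fun M hM => by
    rw [← hW M hM]; simp only [a, δ]; ring
  have hinj : ∀ M ∈ S, ∀ N ∈ S, δ M = δ N → M = N := by
    intro M hM N hN hMN
    have h1 := hWa M hM
    have h2 := hWa N hN
    rw [hMN] at h1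
    have h3 := hab M
    have h4 := hab N
    have e1 : a M = a N := by omega
    have e2 : b M = b N := by omega
    obtain ⟨i, j, e⟩ := M
    obtain ⟨i', j', e'⟩ := N
    simp only [a, b] at e1 e2
    have := e.2
    have := e'.2
    have h5 : (e : ℕ) = e' := by omega
    have h6 : i = i' := by omega
    have h7 : j = j' := by omega
    rw [Prod.mk.injEq, Prod.mk.injEq]
    exact ⟨h6, h7, Fin.ext h5⟩
  obtain ⟨M1, hM1, hmin⟩ := S.exists_min_image δ hS
  obtain ⟨M2, hM2, hmax⟩ := S.exists_max_image δ hS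
  have hunit : IsUnit (Polynomial.C γ) := Polynomial.isUnit_C.mpr (isUnit_iff_ne_zero.mpr hγ)
  by_cases hr : δ M2 = δ M1
  · refine ⟨M1, ?_, ?_⟩
    · ext N
      rw [Finset.mem_singleton]
      constructor
      · intro hN
        apply hinj N hN M1 hM1
        have := hmin N hN
        have := hmax N hN
        omega
      · rintro rfl; exact hM1
    · have hSs : S = {M1} := by
        ext N
        rw [Finset.mem_singleton]
        constructor
        · intro hN
          apply hinj N hN M1 hM1
          have := hmin N hN
          have := hmax N hN
          omega
        · rintro rfl; exact hM1
      rw [hSs, Finset.sum_singleton] at h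
      change _ * (u ^ a M1 * v ^ b M1) = _ at h
      rw [← h] at hunit
      have hu1 : IsUnit (u ^ a M1) := isUnit_of_mul_isUnit_left (isUnit_of_mul_isUnit_right hunit)
      have hv1 : IsUnit (v ^ b M1) := isUnit_of_mul_isUnit_right (isUnit_of_mul_isUnit_right hunit)
      have : a M1 = 0 ∨ b M1 = 0 := by
        by_contra! hcon
        exact hnc ⟨Polynomial.natDegree_eq_zero_of_isUnit ((isUnit_pow_iff hcon.1).mp hu1),
          Polynomial.natDegree_eq_zero_of_isUnit ((isUnit_pow_iff hcon.2).mp hv1)⟩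
      simp only [a, b] at this
      omega
  · exfalso
    have hlt : δ M1 < δ M2 := lt_of_le_of_ne (hmin M2 hM2) (Ne.symm hr)
    let r := δ M2 - δ M1
    let l : ℕ × ℕ × Fin 2 → ℕ := fun M => δ M - δ M1
    let g : Polynomial F := ∑ M ∈ S, Polynomial.C (c M) * Polynomial.X ^ (l M)
    have hcoef : ∀ N ∈ S, g.coeff (l N) = c N := by
      intro N hN
      simp only [g, Polynomial.finsetSum_coeff, Polynomial.coeff_C_mul_X_pow]
      rw [Finset.sum_eq_single N]
      · simp
      · intro M hM hMN
        rw [if_neg]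
        intro hl
        apply hMN
        apply hinj M hM N hN
        have := hmin M hM
        have := hmin N hN
        simp only [l] at hl
        omega
      · intro h; exact absurd hN h
    have hdeg : g.degree ≠ 0 := by
      intro hdeg
      have h1 := hcoef M2 hM2
      rw [Polynomial.eq_C_of_degree_eq_zero hdeg, Polynomial.coeff_C, if_neg] at h1
      · exact hc M2 hM2 h1.symm
      · simp only [l]; omega
    obtain ⟨ρ, hρ⟩ := IsAlgClosed.exists_root g hdeg
    have hρ0 : ρ ≠ 0 := by
      rintro rfl
      have h1 := hcoef M1 hM1
      have : l M1 = 0 := by simp [l]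
      rw [this, Polynomial.coeff_zero_eq_eval_zero, hρ] at h1
      exact hc M1 hM1 h1.symm
    obtain ⟨U, hU⟩ : ∃ U, U = u ^ m := ⟨_, rfl⟩
    obtain ⟨V, hV⟩ : ∃ V, V = v ^ (m + 2) := ⟨_, rfl⟩
    obtain ⟨R, hR⟩ : ∃ R, R = Polynomial.C (algebraMap F K ρ) := ⟨_, rfl⟩
    have hsum : ∑ M ∈ S, Polynomial.C (algebraMap F K (c M)) * R ^ (l M) = 0 := by
      have := congrArg (fun x => Polynomial.C (algebraMap F K x)) hρ
      simpa [g, Polynomial.eval_finsetSum, hR] using this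
    have hdvd : V - R * U ∣ Polynomial.C γ := by
      have e : Polynomial.C γ = ∑ M ∈ S, Polynomial.C (algebraMap F K (c M)) *
          (u ^ (a M2) * v ^ (b M1) * ((V ^ (l M) - (R * U) ^ (l M)) * U ^ (r - l M))) := by
        have e0 : ∑ M ∈ S, (Polynomial.C (algebraMap F K (c M)) * R ^ (l M)) *
            (u ^ (a M2) * v ^ (b M1) * U ^ r) = 0 := by
          rw [← Finset.sum_mul, hsum, zero_mul]
        rw [← h, ← sub_zero (∑ M ∈ S, _), ← e0, ← Finset.sum_sub_distrib]
        apply Finset.sum_congr rfl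
        intro M hM
        change _ * (u ^ a M * v ^ b M) - _ = _
        have k1 := hWa M hM
        have k2 := hWa M1 hM1
        have k3 := hWa M2 hM2
        have k4 := hab M
        have k5 := hab M1
        have k6 := hmin M hM
        have k7 := hmax M hM
        have e1 : δ M = δ M1 + l M := by simp only [l]; omega
        have e2 : δ M2 = δ M + (r - l M) := by simp only [l, r]; omega
        have e3 : r = l M + (r - l M) := by simp only [l, r]; omega
        have e4 : a M = a M2 + m * (r - l M) := by
          rw [e2, mul_add] at k3; omega
        have e5 : b M = b M1 + (m + 2) * l M := by
          rw [e1, mul_add] at k1; rw [add_mul]; omega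
        have e6 : U ^ r = U ^ l M * U ^ (r - l M) := by rw [← pow_add, ← e3]
        have e7 : u ^ a M = u ^ a M2 * U ^ (r - l M) := by rw [e4, pow_add, pow_mul, ← hU]
        have e8 : v ^ b M = v ^ b M1 * V ^ l M := by rw [e5, pow_add, pow_mul v (m + 2), ← hV]
        rw [e6, e7, e8, mul_pow R U]
        exact ring_aux _ _ _ _ _ _ _
      rw [e]
      apply Finset.dvd_sum
      intro M _
      exact Dvd.dvd.mul_left (Dvd.dvd.mul_left (Dvd.dvd.mul_right (sub_dvd_pow_sub_pow _ _ _) _) _) _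
    have hu2 : IsUnit (V - R * U) := isUnit_of_dvd_unit hdvd hunit
    obtain ⟨γ', hγ', hE⟩ := Polynomial.isUnit_iff.mp hu2
    exact hnc (lemE d hw hd hρ0 hm (isUnit_iff_ne_zero.mp hγ') hu hv (by rw [← hU, ← hV, ← hR]; exact hE.symm))

lemma exists_sqrt {K : Type*} [Field K] {x y z : Polynomial K} (hxy : IsCoprime x y)
    (h : x * y = z ^ 2) {w : K} (hw : w ≠ 0) (hx : x.coeff 0 = w ^ 2) :
    ∃ u : Polynomial K, u ^ 2 = x ∧ u.coeff 0 = w := by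
  obtain ⟨u0, e, he⟩ := exists_associated_pow_of_mul_eq_pow' hxy h
  obtain ⟨e', he', hE⟩ := Polynomial.isUnit_iff.mp e.isUnit
  have h0 : u0.coeff 0 ^ 2 * e' = w ^ 2 := by
    rw [← hx, ← he, ← hE]; simp [Polynomial.coeff_zero_eq_eval_zero]
  have hu0 : u0.coeff 0 ≠ 0 := by
    intro h1; rw [h1] at h0; apply hw; simpa using h0.symm
  refine ⟨Polynomial.C (w / u0.coeff 0) * u0, ?_, ?_⟩
  · rw [mul_pow, ← he, ← hE, ← Polynomial.C_pow, mul_comm]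
    congr 2
    field_simp
    exact h0.symm
  · rw [Polynomial.coeff_C_mul]; field_simp

lemma core1 {F K : Type*} [Field F] [IsAlgClosed F] [Field K] [Algebra F K] (d : Derivation F K K)
    {w : K} (hw : w ≠ 0) (hd : d w = 1) {m : ℕ} (hm : 3 ≤ m)
    {x y z : Polynomial K} {γ : K} (hγ : γ ≠ 0)
    (hx : x.coeff 0 = w ^ 2) (hy : y.coeff 0 = w ^ 2) (hz : z.coeff 0 = w ^ 2)
    (hxyz : x * y = z ^ 2)
    (hnc : ¬ (x.natDegree = 0 ∧ y.natDegree = 0 ∧ z.natDegree = 0))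
    (S : Finset (ℕ × ℕ × Fin 2)) (c : ℕ × ℕ × Fin 2 → F) (hc : ∀ M ∈ S, c M ≠ 0)
    (hS : S.Nonempty) {W : ℕ} (hWpos : W ≠ 0)
    (hW : ∀ M ∈ S, (m + 2) * M.1 + m * M.2.1 + (m + 1) * (M.2.2 : ℕ) = W)
    (h : ∑ M ∈ S, Polynomial.C (algebraMap F K (c M)) *
      (x ^ M.1 * y ^ M.2.1 * z ^ (M.2.2 : ℕ)) = Polynomial.C γ) :
    ∃ M0, S = {M0} ∧ (M0.2.2 : ℕ) = 0 ∧ (M0.1 = 0 ∨ M0.2.1 = 0) := by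
  have hunit : IsUnit (Polynomial.C γ) := Polynomial.isUnit_C.mpr (isUnit_iff_ne_zero.mpr hγ)
  have hcop : IsCoprime x y := by
    apply isCoprime_of_prime_dvd
    · rintro ⟨rfl, -⟩
      simp at hx; exact hw (pow_eq_zero_iff (two_ne_zero) |>.mp hx.symm)
    · intro π hπ hπx hπy
      have hπz : π ∣ z := hπ.dvd_of_dvd_pow (hxyz ▸ Dvd.dvd.mul_right hπx y)
      apply hπ.not_isUnit
      apply isUnit_of_dvd_unit _ hunit
      rw [← h]
      apply Finset.dvd_sum
      intro M hM
      apply Dvd.dvd.mul_left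
      have := hW M hM
      by_cases h1 : M.1 = 0
      · by_cases h2 : M.2.1 = 0
        · have h3 : (M.2.2 : ℕ) ≠ 0 := by
            intro h3; rw [h1, h2, h3] at this; simp at this; exact hWpos this.symm
          exact Dvd.dvd.mul_left (dvd_pow hπz h3) _
        · exact Dvd.dvd.mul_right (Dvd.dvd.mul_left (dvd_pow hπy h2) _) _
      · exact Dvd.dvd.mul_right (Dvd.dvd.mul_right (dvd_pow hπx h1) _) _
  obtain ⟨u, hux, hu0⟩ := exists_sqrt hcop hxyz hw hx
  obtain ⟨v, hvy, hv0⟩ := exists_sqrt hcop.symm (by rw [mul_comm]; exact hxyz) hw hy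
  have hzuv : z = u * v := by
    have : z ^ 2 = (u * v) ^ 2 := by rw [← hxyz, ← hux, ← hvy]; ring
    rcases sq_eq_sq_iff_eq_or_eq_neg.mp this with h1 | h1
    · exact h1
    · have h2 := congrArg (fun P => Polynomial.coeff P 0) h1
      simp only [Polynomial.coeff_neg, Polynomial.mul_coeff_zero, hz, hu0, hv0] at h2
      have h3 : (2 : K) = 0 := by
        have : (2 : K) * w ^ 2 = 0 := by linear_combination h2
        simpa [hw] using this
      have h4 : (2 : Polynomial K) = 0 := by
        rw [← Polynomial.C_ofNat, h3, Polynomial.C_0]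
      linear_combination h1 - (u * v) * h4
  apply core2 d hw hd hm hγ hu0 hv0 _ S c hc hS hW
  · rw [← h]
    apply Finset.sum_congr rfl
    intro M _
    rw [← hux, ← hvy, hzuv]
    ring
  · rintro ⟨h1, h2⟩
    apply hnc
    rw [← hux, ← hvy, hzuv]
    refine ⟨by simp [h1], by simp [h2], ?_⟩
    have := Polynomial.natDegree_mul_le (p := u) (q := v)
    omega

end Q2Aux

namespace Q2Aux

section
variable {k : Type*} [Field k]

lemma q2_rel : q2X k * q2Y k = q2Z k * (q2Z k + 1) := by
  have : Ideal.Quotient.mk (Ideal.span {q2Rel k}) (q2Rel k) = 0 :=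
    Ideal.Quotient.eq_zero_iff_mem.mpr (Ideal.subset_span rfl)
  rw [q2Rel, map_sub, sub_eq_zero] at this
  rw [map_mul, map_mul, map_add, map_one] at this
  exact this

/-- the universal property of `A` -/
def q2Lift {B : Type*} [CommRing B] [Algebra k B] (x y z : B) (h : x * y = z * (z + 1)) :
    Q2Ring k →ₐ[k] B :=
  Ideal.Quotient.liftₐ (Ideal.span {q2Rel k}) (MvPolynomial.aeval ![x, y, z]) (by
    intro a ha
    have : Ideal.span {q2Rel k} ≤ RingHom.ker (MvPolynomial.aeval (R := k) ![x, y, z]) := by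
      rw [Ideal.span_le, Set.singleton_subset_iff]
      simp [q2Rel, RingHom.mem_ker, h]
    exact this ha)

variable {B : Type*} [CommRing B] [Algebra k B]

lemma q2Lift_X (x y z : B) (h : x * y = z * (z + 1)) : q2Lift (k := k) x y z h (q2X k) = x := by
  change MvPolynomial.aeval ![x, y, z] (X 0 : MvPolynomial (Fin 3) k) = x
  simp

lemma q2Lift_Y (x y z : B) (h : x * y = z * (z + 1)) : q2Lift (k := k) x y z h (q2Y k) = y := by
  change MvPolynomial.aeval ![x, y, z] (X 1 : MvPolynomial (Fin 3) k) = y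
  simp

lemma q2Lift_Z (x y z : B) (h : x * y = z * (z + 1)) : q2Lift (k := k) x y z h (q2Z k) = z := by
  change MvPolynomial.aeval ![x, y, z] (X 2 : MvPolynomial (Fin 3) k) = z
  simp

lemma q2_ext {f g : Q2Ring k →ₐ[k] B} (hX : f (q2X k) = g (q2X k)) (hY : f (q2Y k) = g (q2Y k))
    (hZ : f (q2Z k) = g (q2Z k)) : f = g := by
  apply Ideal.Quotient.algHom_ext
  apply MvPolynomial.algHom_ext
  intro i
  fin_cases i
  · exact hX
  · exact hY
  · exact hZ

/-- index set of the monomial basis -/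
abbrev Idx := ℕ × ℕ × Fin 2

/-- the monomials -/
def mon (k : Type*) [Field k] (M : Idx) : Q2Ring k := q2X k ^ M.1 * q2Y k ^ M.2.1 * q2Z k ^ (M.2.2 : ℕ)

/-- weight -/
def wt (m : ℕ) (M : Idx) : ℕ := (m + 2) * M.1 + m * M.2.1 + (m + 1) * (M.2.2 : ℕ)

/-- degree -/
def dl (M : Idx) : ℕ := M.1 + M.2.1 + (M.2.2 : ℕ)

lemma dl_inj {m : ℕ} {M N : Idx} (h1 : wt m M = wt m N) (h2 : dl M = dl N) : M = N := by
  obtain ⟨i, j, e⟩ := M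
  obtain ⟨i', j', e'⟩ := N
  simp only [wt, dl] at h1 h2
  have e1 := e.2
  have e2 := e'.2
  have k1 : (m + 2) * i + m * j + (m + 1) * (e : ℕ) = m * (i + j + e) + (2 * i + e) := by ring
  have k2 : (m + 2) * i' + m * j' + (m + 1) * (e' : ℕ) = m * (i' + j' + e') + (2 * i' + e') := by ring
  rw [k1, k2, h2] at h1
  have h5 : (e : ℕ) = e' := by omega
  have h6 : i = i' := by omega
  have h7 : j = j' := by omega
  rw [Prod.mk.injEq, Prod.mk.injEq]
  exact ⟨h6, h7, Fin.ext h5⟩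

lemma span_mon : Submodule.span k (Set.range (mon k)) = ⊤ := by
  set N := Submodule.span k (Set.range (mon k)) with hN
  have hm : ∀ M, mon k M ∈ N := fun M => Submodule.subset_span ⟨M, rfl⟩
  have hind : ∀ g : Q2Ring k, (∀ M, g * mon k M ∈ N) → ∀ a ∈ N, g * a ∈ N := by
    intro g hg a ha
    induction ha using Submodule.span_induction with
    | mem x hx => obtain ⟨M, rfl⟩ := hx; exact hg M
    | zero => rw [mul_zero]; exact N.zero_mem
    | add x y _ _ hx hy => rw [mul_add]; exact N.add_mem hx hy
    | smul c x _ hx => rw [mul_smul_comm]; exact N.smul_mem c hx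
  have hX : ∀ a ∈ N, q2X k * a ∈ N := hind _ (by
    rintro ⟨i, j, e⟩
    convert hm (i + 1, j, e) using 1
    simp only [mon]; ring)
  have hY : ∀ a ∈ N, q2Y k * a ∈ N := hind _ (by
    rintro ⟨i, j, e⟩
    convert hm (i, j + 1, e) using 1
    simp only [mon]; ring)
  have hZ : ∀ a ∈ N, q2Z k * a ∈ N := hind _ (by
    rintro ⟨i, j, e⟩
    fin_cases e
    · convert hm (i, j, 1) using 1
      simp [mon]; ring
    · have : q2Z k * mon k (i, j, 1) = mon k (i + 1, j + 1, 0) - mon k (i, j, 1) := by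
        simp only [mon, Fin.val_one, Fin.val_zero]
        linear_combination (-(q2X k ^ i * q2Y k ^ j)) * q2_rel (k := k)
      change q2Z k * mon k (i, j, 1) ∈ N
      rw [this]
      exact N.sub_mem (hm _) (hm _))
  rw [eq_top_iff]
  intro a _
  obtain ⟨P, rfl⟩ := Ideal.Quotient.mk_surjective a
  induction P using MvPolynomial.induction_on with
  | C c =>
    have : Ideal.Quotient.mk (Ideal.span {q2Rel k}) (C c) = c • mon k (0, 0, 0) := by
      simp only [mon, Fin.val_zero, pow_zero, mul_one]
      have e := Algebra.smul_def c (1 : Q2Ring k)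
      rw [mul_one] at e
      exact e.symm
    rw [this]; exact N.smul_mem c (hm _)
  | add p q hp hq => rw [map_add]; exact N.add_mem (hp trivial) (hq trivial)
  | mul_X p i hp =>
    rw [map_mul, mul_comm]
    fin_cases i
    · exact hX _ (hp trivial)
    · exact hY _ (hp trivial)
    · exact hZ _ (hp trivial)

lemma exists_rep (a : Q2Ring k) : ∃ c : Idx →₀ k, a = ∑ M ∈ c.support, c M • mon k M := by
  have : a ∈ Submodule.span k (Set.range (mon k)) := by rw [span_mon]; trivial
  rw [Finsupp.mem_span_range_iff_exists_finsupp] at this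
  obtain ⟨c, hc⟩ := this
  exact ⟨c, hc.symm⟩

variable {K : Type*} [Field K] [Algebra k K]

/-- the valuation homomorphism -/
def Th (k : Type*) [Field k] {K : Type*} [Field K] [Algebra k K] (m : ℕ) (w : K) :
    Q2Ring k →ₐ[k] Polynomial K :=
  q2Lift (Polynomial.C (w ^ 2) * Polynomial.X ^ (m + 2) + Polynomial.X)
    (Polynomial.C (w ^ 2) * Polynomial.X ^ m)
    (Polynomial.C (w ^ 2) * Polynomial.X ^ (m + 1)) (by ring)

lemma Th_X (m : ℕ) (w : K) : Th k m w (q2X k) =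
    Polynomial.C (w ^ 2) * Polynomial.X ^ (m + 2) + Polynomial.X := q2Lift_X _ _ _ _
lemma Th_Y (m : ℕ) (w : K) : Th k m w (q2Y k) =
    Polynomial.C (w ^ 2) * Polynomial.X ^ m := q2Lift_Y _ _ _ _
lemma Th_Z (m : ℕ) (w : K) : Th k m w (q2Z k) =
    Polynomial.C (w ^ 2) * Polynomial.X ^ (m + 1) := q2Lift_Z _ _ _ _

lemma Th_X_deg (m : ℕ) (w : K) : (Th k m w (q2X k)).natDegree ≤ m + 2 := by
  rw [Th_X]
  apply Polynomial.natDegree_add_le_of_degree_le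
  · exact Polynomial.natDegree_C_mul_X_pow_le _ _
  · exact Polynomial.natDegree_X_le.trans (by omega)
lemma Th_Y_deg (m : ℕ) (w : K) : (Th k m w (q2Y k)).natDegree ≤ m := by
  rw [Th_Y]; exact Polynomial.natDegree_C_mul_X_pow_le _ _
lemma Th_Z_deg (m : ℕ) (w : K) : (Th k m w (q2Z k)).natDegree ≤ m + 1 := by
  rw [Th_Z]; exact Polynomial.natDegree_C_mul_X_pow_le _ _

lemma Th_X_coeff (m : ℕ) (w : K) : (Th k m w (q2X k)).coeff (m + 2) = w ^ 2 := by
  rw [Th_X, Polynomial.coeff_add, Polynomial.coeff_C_mul_X_pow, if_pos rfl, Polynomial.coeff_X,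
    if_neg (by omega), add_zero]
lemma Th_Y_coeff (m : ℕ) (w : K) : (Th k m w (q2Y k)).coeff m = w ^ 2 := by
  rw [Th_Y, Polynomial.coeff_C_mul_X_pow, if_pos rfl]
lemma Th_Z_coeff (m : ℕ) (w : K) : (Th k m w (q2Z k)).coeff (m + 1) = w ^ 2 := by
  rw [Th_Z, Polynomial.coeff_C_mul_X_pow, if_pos rfl]

/-- degree and top coefficient of monomials under a homomorphism to a polynomial ring -/
lemma mon_deg {R : Type*} [CommRing R] {x y z : Polynomial R} {m : ℕ} {a b c : R}
    (hx : x.natDegree ≤ m + 2) (hy : y.natDegree ≤ m) (hz : z.natDegree ≤ m + 1)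
    (hx' : x.coeff (m + 2) = a) (hy' : y.coeff m = b) (hz' : z.coeff (m + 1) = c) (M : Idx) :
    (x ^ M.1 * y ^ M.2.1 * z ^ (M.2.2 : ℕ)).natDegree ≤ wt m M ∧
    (x ^ M.1 * y ^ M.2.1 * z ^ (M.2.2 : ℕ)).coeff (wt m M) =
      a ^ M.1 * b ^ M.2.1 * c ^ (M.2.2 : ℕ) := by
  have h1 : (x ^ M.1).natDegree ≤ (m + 2) * M.1 := by
    rw [mul_comm]; exact Polynomial.natDegree_pow_le_of_le _ hx
  have h2 : (y ^ M.2.1).natDegree ≤ m * M.2.1 := by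
    rw [mul_comm]; exact Polynomial.natDegree_pow_le_of_le _ hy
  have h3 : (z ^ (M.2.2 : ℕ)).natDegree ≤ (m + 1) * (M.2.2 : ℕ) := by
    rw [mul_comm]; exact Polynomial.natDegree_pow_le_of_le _ hz
  have h4 := Polynomial.natDegree_mul_le_of_le h1 h2
  refine ⟨Polynomial.natDegree_mul_le_of_le h4 h3, ?_⟩
  rw [wt, Polynomial.coeff_mul_add_eq_of_natDegree_le h4 h3, Polynomial.coeff_mul_add_eq_of_natDegree_le h1 h2,
    mul_comm (m + 2), mul_comm m, mul_comm (m + 1), Polynomial.coeff_pow_of_natDegree_le hx,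
    Polynomial.coeff_pow_of_natDegree_le hy, Polynomial.coeff_pow_of_natDegree_le hz,
    hx', hy', hz']

lemma Th_mon (m : ℕ) (w : K) (M : Idx) : (Th k m w (mon k M)).natDegree ≤ wt m M ∧
    (Th k m w (mon k M)).coeff (wt m M) = w ^ (2 * dl M) := by
  have := mon_deg (Th_X_deg (k := k) m w) (Th_Y_deg (k := k) m w) (Th_Z_deg (k := k) m w)
    (Th_X_coeff m w) (Th_Y_coeff m w) (Th_Z_coeff m w) M
  rw [mon, map_mul, map_mul, map_pow, map_pow, map_pow]
  refine ⟨this.1, this.2.trans ?_⟩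
  rw [dl]; ring

/-- generic weighted sums -/
lemma coeff_sum_top {f : Q2Ring k →ₐ[k] Polynomial K} {m : ℕ}
    (hf : ∀ M, (f (mon k M)).natDegree ≤ wt m M) (c : Idx →₀ k) {W : ℕ}
    (hW : ∀ M ∈ c.support, wt m M ≤ W) :
    (f (∑ M ∈ c.support, c M • mon k M)).coeff W =
      ∑ M ∈ c.support with wt m M = W, c M • (f (mon k M)).coeff (wt m M) := by
  rw [map_sum, Polynomial.finsetSum_coeff, Finset.sum_filter]
  apply Finset.sum_congr rfl
  intro M hM
  rw [map_smul, Polynomial.coeff_smul]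
  split_ifs with h
  · rw [h]
  · rw [Polynomial.coeff_eq_zero_of_natDegree_lt, smul_zero]
    have := hf M
    have := hW M hM
    omega

lemma natDegree_sum_le {f : Q2Ring k →ₐ[k] Polynomial K} {m : ℕ}
    (hf : ∀ M, (f (mon k M)).natDegree ≤ wt m M) (c : Idx →₀ k) {W : ℕ}
    (hW : ∀ M ∈ c.support, wt m M ≤ W) :
    (f (∑ M ∈ c.support, c M • mon k M)).natDegree ≤ W := by
  rw [map_sum]
  apply Polynomial.natDegree_sum_le_of_forall_le
  intro M hM
  rw [map_smul]
  exact (Polynomial.natDegree_smul_le _ _).trans ((hf M).trans (hW M hM))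

lemma top_ne_zero {w : K} (htr : Transcendental k w) {m : ℕ} (c : Idx →₀ k) {W : ℕ}
    (hW : ∀ M ∈ c.support, wt m M ≤ W) (hex : ∃ M ∈ c.support, wt m M = W) :
    (Th k m w (∑ M ∈ c.support, c M • mon k M)).coeff W ≠ 0 := by
  rw [coeff_sum_top (fun M => (Th_mon m w M).1) c hW]
  intro h0
  obtain ⟨N, hN, hNW⟩ := hex
  let g : Polynomial k := ∑ M ∈ c.support with wt m M = W,
    Polynomial.C (c M) * Polynomial.X ^ (2 * dl M)
  have hg : Polynomial.aeval w g = 0 := by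
    rw [← h0]
    simp only [g, map_sum, map_mul, Polynomial.aeval_C, map_pow, Polynomial.aeval_X]
    apply Finset.sum_congr rfl
    intro M _
    rw [(Th_mon m w M).2, Algebra.smul_def]
  have hg0 : g = 0 := by
    by_contra hne
    exact htr ⟨g, hne, hg⟩
  have : g.coeff (2 * dl N) = c N := by
    simp only [g, Polynomial.finsetSum_coeff, Polynomial.coeff_C_mul_X_pow]
    rw [Finset.sum_eq_single N]
    · simp
    · intro M hM hMN
      rw [if_neg]
      intro hl
      apply hMN
      rw [Finset.mem_filter] at hM
      exact dl_inj (hM.2.trans hNW.symm) (by omega)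
    · intro h; exact absurd (Finset.mem_filter.mpr ⟨hN, hNW⟩) h
  rw [hg0, Polynomial.coeff_zero] at this
  exact (Finsupp.mem_support_iff.mp hN) this.symm

lemma wt_le_of_natDegree {w : K} (htr : Transcendental k w) {m : ℕ} (c : Idx →₀ k) (M : Idx)
    (hM : M ∈ c.support) :
    wt m M ≤ (Th k m w (∑ M ∈ c.support, c M • mon k M)).natDegree := by
  obtain ⟨N, hN, hmax⟩ := c.support.exists_max_image (wt m) ⟨M, hM⟩
  exact (hmax M hM).trans (Polynomial.le_natDegree_of_ne_zero
    (top_ne_zero htr c hmax ⟨N, hN, rfl⟩))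

lemma Th_inj {w : K} (htr : Transcendental k w) {m : ℕ} : Function.Injective (Th k m w) := by
  rw [injective_iff_map_eq_zero]
  intro a ha
  obtain ⟨c, rfl⟩ := exists_rep a
  by_cases hs : c.support.Nonempty
  · obtain ⟨N, hN, hmax⟩ := c.support.exists_max_image (wt m) hs
    have := top_ne_zero htr c hmax ⟨N, hN, rfl⟩
    rw [ha] at this
    simp at this
  · rw [Finset.not_nonempty_iff_eq_empty] at hs
    rw [hs]; simp

end
end Q2Aux

namespace Q2Aux

section
variable {R : Type*} [CommRing R]

/-- `f` has degree at most `d`, with coefficient `r` in degree `d` -/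
def IsTop (f : AddMonoidAlgebra R ℚ) (d : ℚ) (r : R) : Prop :=
  f.coeff d = r ∧ ∀ e, d < e → f.coeff e = 0

lemma IsTop.mul {f g : AddMonoidAlgebra R ℚ} {d e : ℚ} {r s : R} (hf : IsTop f d r)
    (hg : IsTop g e s) : IsTop (f * g) (d + e) (r * s) := by
  classical
  have hf' : ∀ a ∈ f.coeff.support, a ≤ d := by
    intro a ha
    by_contra! h
    exact (Finsupp.mem_support_iff.mp ha) (hf.2 a h)
  have hg' : ∀ a ∈ g.coeff.support, a ≤ e := by
    intro a ha
    by_contra! h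
    exact (Finsupp.mem_support_iff.mp ha) (hg.2 a h)
  refine ⟨?_, ?_⟩
  · rw [← hf.1, ← hg.1]
    simp_rw [AddMonoidAlgebra.coeff_mul, Finsupp.sum]
    rw [Finset.sum_eq_single d, Finset.sum_eq_single e, if_pos rfl]
    · intro a ha hne
      rw [if_neg]
      intro h; apply hne; linarith
    · intro h; rw [if_pos rfl, Finsupp.notMem_support_iff.1 h, mul_zero]
    · intro a ha hne
      apply Finset.sum_eq_zero
      intro b hb
      rw [if_neg]
      intro h
      apply hne
      linarith [hf' a ha, hg' b hb]
    · intro h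
      apply Finset.sum_eq_zero
      intro b hb
      rw [Finsupp.notMem_support_iff.1 h, zero_mul, ite_self]
  · intro x hx
    simp_rw [AddMonoidAlgebra.coeff_mul, Finsupp.sum]
    apply Finset.sum_eq_zero
    intro a ha
    apply Finset.sum_eq_zero
    intro b hb
    rw [if_neg]
    intro h
    linarith [hf' a ha, hg' b hb]

lemma IsTop.one : IsTop (1 : AddMonoidAlgebra R ℚ) 0 1 := by
  classical
  refine ⟨?_, ?_⟩
  · rw [AddMonoidAlgebra.one_def, AddMonoidAlgebra.coeff_single, Finsupp.single_apply, if_pos rfl]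
  · intro e he
    rw [AddMonoidAlgebra.one_def, AddMonoidAlgebra.coeff_single, Finsupp.single_apply, if_neg he.ne]

lemma IsTop.single (r : R) : IsTop (AddMonoidAlgebra.single (0 : ℚ) r) 0 r := by
  classical
  refine ⟨?_, ?_⟩
  · rw [AddMonoidAlgebra.coeff_single, Finsupp.single_apply, if_pos rfl]
  · intro e he
    rw [AddMonoidAlgebra.coeff_single, Finsupp.single_apply, if_neg he.ne]

lemma IsTop.pow {f : AddMonoidAlgebra R ℚ} {d : ℚ} {r : R} (hf : IsTop f d r) (n : ℕ) :
    IsTop (f ^ n) (n * d) (r ^ n) := by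
  induction n with
  | zero => simpa using IsTop.one
  | succ n ih =>
    have := ih.mul hf
    rw [pow_succ, pow_succ]
    convert this using 1
    push_cast; ring

end

section
variable {K : Type*} [Field K]

/-- the twisted embedding -/
def Xi (K : Type*) [Field K] (κ : ℚ) :
    Polynomial (Polynomial K) →+* AddMonoidAlgebra (Polynomial K) ℚ :=
  Polynomial.eval₂RingHom
    (Polynomial.eval₂RingHom (AddMonoidAlgebra.singleZeroRingHom.comp Polynomial.C)
      (AddMonoidAlgebra.single 1 1))
    (AddMonoidAlgebra.single (-κ) Polynomial.X)

lemma Xi_monomial (κ : ℚ) (i j : ℕ) (b : K) :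
    Xi K κ (Polynomial.monomial i (Polynomial.monomial j b)) =
      AddMonoidAlgebra.single ((j : ℚ) - κ * i) (Polynomial.monomial i b) := by
  simp only [Xi, Polynomial.coe_eval₂RingHom, Polynomial.eval₂_monomial, RingHom.comp_apply,
    AddMonoidAlgebra.single_pow, AddMonoidAlgebra.singleZeroRingHom_apply,
    one_pow]
  have e : (0 : ℚ) + j • (1 : ℚ) + i • (-κ) = (j : ℚ) - κ * i := by
    simp only [nsmul_eq_mul]; ring
  change AddMonoidAlgebra.single 0 (Polynomial.C b) * _ * _ = _
  rw [← e, ← Polynomial.C_mul_X_pow_eq_monomial, AddMonoidAlgebra.single_mul_single,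
    AddMonoidAlgebra.single_mul_single, mul_one]

lemma Xi_C_C (κ : ℚ) (b : K) : Xi K κ (Polynomial.C (Polynomial.C b)) =
    AddMonoidAlgebra.single 0 (Polynomial.C b) := by
  have := Xi_monomial κ 0 0 b
  simpa using this

lemma Xi_coeff (κ e : ℚ) (i : ℕ) (P : Polynomial (Polynomial K)) :
    (∀ j : ℕ, (j : ℚ) = e + κ * i → ((Xi K κ P).coeff e).coeff i = (P.coeff i).coeff j) ∧
    ((∀ j : ℕ, (j : ℚ) ≠ e + κ * i) → ((Xi K κ P).coeff e).coeff i = 0) := by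
  classical
  induction P using Polynomial.induction_on' with
  | add p q hp hq =>
    refine ⟨fun j hj => ?_, fun h => ?_⟩
    · rw [map_add, AddMonoidAlgebra.coeff_add, Finsupp.add_apply, Polynomial.coeff_add, hp.1 j hj,
        hq.1 j hj, Polynomial.coeff_add, Polynomial.coeff_add]
    · rw [map_add, AddMonoidAlgebra.coeff_add, Finsupp.add_apply, Polynomial.coeff_add, hp.2 h,
        hq.2 h, add_zero]
  | monomial i' a =>
    induction a using Polynomial.induction_on' with
    | add p q hp hq =>
      refine ⟨fun j hj => ?_, fun h => ?_⟩
      · rw [map_add, map_add, AddMonoidAlgebra.coeff_add, Finsupp.add_apply,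
          Polynomial.coeff_add, hp.1 j hj,
          hq.1 j hj, Polynomial.coeff_add, Polynomial.coeff_add]
      · rw [map_add, map_add, AddMonoidAlgebra.coeff_add, Finsupp.add_apply,
          Polynomial.coeff_add, hp.2 h, hq.2 h, add_zero]
    | monomial j' b =>
      rw [Xi_monomial, AddMonoidAlgebra.coeff_single, Finsupp.single_apply]
      refine ⟨fun j hj => ?_, fun h => ?_⟩
      · by_cases hi : i' = i
        · subst hi
          by_cases hjj : j' = j
          · subst hjj
            rw [if_pos (by linarith)]; simp
          · rw [if_neg]
            · simp [Polynomial.coeff_monomial, hjj]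
            · intro h; apply hjj; have : (j' : ℚ) = j := by linarith
              exact_mod_cast this
        · split_ifs <;> simp [Polynomial.coeff_monomial, hi]
      · split_ifs with h1
        · rw [Polynomial.coeff_monomial, if_neg]
          rintro rfl
          apply h j'; linarith
        · simp

end

lemma exp_lemma {k F K : Type*} [Field k] [Field F] [IsAlgClosed F] [Field K] [Algebra k F]
    [Algebra F K] [Algebra k K] [IsScalarTower k F K] (d : Derivation F K K)
    {w : K} (hw : w ≠ 0) (hd : d w = 1) (htr : Transcendental k w) {m : ℕ} (hm : 3 ≤ m)
    (ψ : Q2Ring k →ₐ[k] Polynomial (Q2Ring k)) (hψ : ∀ a, (ψ a).coeff 0 = a)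
    (hnt : ¬ ((ψ (q2X k)).natDegree = 0 ∧ (ψ (q2Y k)).natDegree = 0 ∧ (ψ (q2Z k)).natDegree = 0))
    (c : Idx →₀ k)
    (hG : ψ (∑ M ∈ c.support, c M • mon k M) = Polynomial.C (∑ M ∈ c.support, c M • mon k M))
    {W : ℕ} (hW0 : W ≠ 0) (hW : ∀ M ∈ c.support, wt m M ≤ W)
    (hex : ∃ M ∈ c.support, wt m M = W) :
    ∃ M0, c.support.filter (fun M => wt m M = W) = {M0} ∧ (M0.2.2 : ℕ) = 0 ∧
      (M0.1 = 0 ∨ M0.2.1 = 0) := by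
  classical
  let gen : Fin 3 → Q2Ring k := ![q2X k, q2Y k, q2Z k]
  let dg : Fin 3 → ℕ := ![m + 2, m, m + 1]
  have hgc : ∀ g, (Th k m w (gen g)).coeff (dg g) = w ^ 2 := by
    intro g
    fin_cases g
    · exact Th_X_coeff m w
    · exact Th_Y_coeff m w
    · exact Th_Z_coeff m w
  have hgd : ∀ g, (Th k m w (gen g)).natDegree ≤ dg g := by
    intro g
    fin_cases g
    · exact Th_X_deg m w
    · exact Th_Y_deg m w
    · exact Th_Z_deg m w
  let N := Finset.univ.sup (fun g => (ψ (gen g)).natDegree) + 1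
  let T : Finset (Fin 3 × ℕ) := ((Finset.univ : Finset (Fin 3)) ×ˢ Finset.range N).filter
    (fun t => t.2 ≠ 0 ∧ (ψ (gen t.1)).coeff t.2 ≠ 0)
  have hTmem : ∀ g i, i ≠ 0 → (ψ (gen g)).coeff i ≠ 0 → (g, i) ∈ T := by
    intro g i hi h
    simp only [T, Finset.mem_filter, Finset.mem_product, Finset.mem_univ, true_and,
      Finset.mem_range]
    refine ⟨?_, hi, h⟩
    have h1 := Polynomial.le_natDegree_of_ne_zero h
    have h2 := Finset.le_sup (f := fun g => (ψ (gen g)).natDegree) (Finset.mem_univ g)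
    omega
  have hTne : T.Nonempty := by
    have : ∃ g, (ψ (gen g)).natDegree ≠ 0 := by
      by_contra! hcon
      exact hnt ⟨hcon 0, hcon 1, hcon 2⟩
    obtain ⟨g, hg⟩ := this
    refine ⟨(g, (ψ (gen g)).natDegree), hTmem _ _ hg ?_⟩
    rw [Polynomial.coeff_natDegree, Polynomial.leadingCoeff_ne_zero]
    rintro h0
    rw [h0] at hg
    simp at hg
  obtain ⟨t0, ht0, hmax⟩ := T.exists_max_image
    (fun t => (((Th k m w ((ψ (gen t.1)).coeff t.2)).natDegree : ℚ) - dg t.1) / t.2) hTne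
  obtain ⟨g0, i0⟩ := t0
  simp only at hmax
  obtain ⟨κ, hκ⟩ : ∃ κ : ℚ, κ = (((Th k m w ((ψ (gen g0)).coeff i0)).natDegree : ℚ) - dg g0) / i0 :=
    ⟨_, rfl⟩
  rw [← hκ] at hmax
  have hi0 : i0 ≠ 0 ∧ (ψ (gen g0)).coeff i0 ≠ 0 := by
    have := (Finset.mem_filter.mp ht0).2
    exact this
  have hbound : ∀ g i, (ψ (gen g)).coeff i ≠ 0 →
      ((Th k m w ((ψ (gen g)).coeff i)).natDegree : ℚ) ≤ dg g + κ * i := by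
    intro g i h
    by_cases hi : i = 0
    · subst hi
      rw [hψ]
      have := hgd g
      have h2 : ((Th k m w (gen g)).natDegree : ℚ) ≤ dg g := by exact_mod_cast this
      simpa using h2
    · have h1 := hmax (g, i) (hTmem g i hi h)
      simp only at h1
      rw [div_le_iff₀ (by positivity)] at h1
      linarith
  have heq0 : ((Th k m w ((ψ (gen g0)).coeff i0)).natDegree : ℚ) = dg g0 + κ * i0 := by
    have : (i0 : ℚ) ≠ 0 := by exact_mod_cast hi0.1
    rw [hκ]; field_simp; ring
  let Ψ : Q2Ring k →+* AddMonoidAlgebra (Polynomial K) ℚ :=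
    (Xi K κ).comp ((Polynomial.mapRingHom (Th k m w).toRingHom).comp ψ.toRingHom)
  have hΨ : ∀ a, Ψ a = Xi K κ ((ψ a).map (Th k m w).toRingHom) := fun a => rfl
  have hPc : ∀ a i, ((ψ a).map (Th k m w).toRingHom).coeff i = Th k m w ((ψ a).coeff i) := by
    intro a i
    rw [Polynomial.coeff_map]; rfl
  obtain ⟨h, hh⟩ : ∃ h : Fin 3 → Polynomial K, ∀ g, h g = (Ψ (gen g)).coeff (dg g) :=
    ⟨_, fun g => rfl⟩
  have hTop : ∀ g, IsTop (Ψ (gen g)) (dg g) (h g) := by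
    intro g
    refine ⟨(hh g).symm, ?_⟩
    intro e he
    ext i
    rw [hΨ, Polynomial.coeff_zero]
    by_cases hj : ∃ j : ℕ, (j : ℚ) = e + κ * i
    · obtain ⟨j, hj⟩ := hj
      rw [(Xi_coeff κ e i _).1 j hj, hPc]
      by_cases h0 : (ψ (gen g)).coeff i = 0
      · rw [h0]; simp
      · apply Polynomial.coeff_eq_zero_of_natDegree_lt
        have := hbound g i h0
        have h2 : ((Th k m w ((ψ (gen g)).coeff i)).natDegree : ℚ) < j := by linarith
        exact_mod_cast h2
    · push Not at hj
      exact (Xi_coeff κ e i _).2 hj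
  have hconst : ∀ g, (h g).coeff 0 = w ^ 2 := by
    intro g
    rw [hh, hΨ, (Xi_coeff κ (dg g) 0 _).1 (dg g) (by simp), hPc, hψ, hgc]
  have hnonc : (h g0).natDegree ≠ 0 := by
    have : (h g0).coeff i0 ≠ 0 := by
      rw [hh, hΨ, (Xi_coeff κ (dg g0) i0 _).1 _ heq0, hPc, Polynomial.coeff_natDegree,
        Polynomial.leadingCoeff_ne_zero]
      intro h0
      apply hi0.2
      apply Th_inj htr
      rw [h0, map_zero]
    have := Polynomial.le_natDegree_of_ne_zero this
    have := hi0.1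
    omega
  have hX : IsTop (Ψ (q2X k)) (m + 2 : ℕ) (h 0) := hTop 0
  have hY : IsTop (Ψ (q2Y k)) m (h 1) := hTop 1
  have hZ : IsTop (Ψ (q2Z k)) (m + 1 : ℕ) (h 2) := hTop 2
  have hrel : h 0 * h 1 = h 2 ^ 2 := by
    have h1 := (hX.mul hY).1
    rw [← map_mul, q2_rel, map_mul, map_add Ψ, map_one Ψ, mul_add, mul_one,
      AddMonoidAlgebra.coeff_add, Finsupp.add_apply] at h1
    have h2 := (hZ.mul hZ).1
    have e1 : ((m + 2 : ℕ) : ℚ) + m = (m + 1 : ℕ) + (m + 1 : ℕ) := by push_cast; ring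
    rw [e1, h2, hZ.2, add_zero] at h1
    · rw [← h1]; ring
    · push_cast
      have : (0 : ℚ) ≤ m := by positivity
      linarith
  have hmon : ∀ M, IsTop (Ψ (mon k M)) (wt m M) (h 0 ^ M.1 * h 1 ^ M.2.1 * h 2 ^ (M.2.2 : ℕ)) := by
    intro M
    have := ((hX.pow M.1).mul (hY.pow M.2.1)).mul (hZ.pow (M.2.2 : ℕ))
    rw [mon, map_mul, map_mul, map_pow, map_pow, map_pow]
    convert this using 1
    rw [wt]; push_cast; ring
  have hsc : ∀ (b : k) M, IsTop (Ψ (b • mon k M)) (wt m M)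
      (Polynomial.C (algebraMap k K b) * (h 0 ^ M.1 * h 1 ^ M.2.1 * h 2 ^ (M.2.2 : ℕ))) := by
    intro b M
    have e : Ψ (algebraMap k (Q2Ring k) b) =
        AddMonoidAlgebra.single 0 (Polynomial.C (algebraMap k K b)) := by
      rw [hΨ, ← Xi_C_C]
      congr 1
      rw [AlgHom.commutes, Polynomial.algebraMap_apply, Polynomial.map_C]
      congr 1
      change Th k m w (algebraMap k (Q2Ring k) b) = _
      rw [AlgHom.commutes, Polynomial.algebraMap_apply]
    have := (IsTop.single (Polynomial.C (algebraMap k K b))).mul (hmon M)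
    rw [← e, ← map_mul, zero_add] at this
    have e2 : b • mon k M = algebraMap k (Q2Ring k) b * mon k M := Algebra.smul_def b (mon k M)
    rw [e2]; exact this
  obtain ⟨γ, hγ⟩ : ∃ γ, γ = (Th k m w (∑ M ∈ c.support, c M • mon k M)).coeff W := ⟨_, rfl⟩
  have hγ0 : γ ≠ 0 := hγ ▸ top_ne_zero htr c hW hex
  have htopG : (Ψ (∑ M ∈ c.support, c M • mon k M)).coeff W = Polynomial.C γ := by
    ext i
    rw [hΨ]
    by_cases hi : i = 0
    · subst hi
      rw [(Xi_coeff κ W 0 _).1 W (by simp), hPc, hψ, hγ, Polynomial.coeff_C_zero]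
    · rw [Polynomial.coeff_C, if_neg hi]
      by_cases hj : ∃ j : ℕ, (j : ℚ) = W + κ * i
      · obtain ⟨j, hj⟩ := hj
        rw [(Xi_coeff κ W i _).1 j hj, hPc, hG, Polynomial.coeff_C, if_neg hi]
        simp
      · push Not at hj
        exact (Xi_coeff κ W i _).2 hj
  have hsum : ∑ M ∈ c.support.filter (fun M => wt m M = W),
      Polynomial.C (algebraMap F K (algebraMap k F (c M))) *
        (h 0 ^ M.1 * h 1 ^ M.2.1 * h 2 ^ (M.2.2 : ℕ)) = Polynomial.C γ := by
    rw [← htopG, map_sum, AddMonoidAlgebra.coeff_sum, Finsupp.finsetSum_apply, Finset.sum_filter]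
    apply Finset.sum_congr rfl
    intro M hM
    rw [← IsScalarTower.algebraMap_apply k F K]
    split_ifs with h1
    · rw [← (hsc (c M) M).1, h1]
    · rw [(hsc (c M) M).2]
      have := hW M hM
      exact_mod_cast lt_of_le_of_ne this h1
  obtain ⟨M1, hM1, hM1W⟩ := hex
  refine core1 d hw hd hm hγ0 (hconst 0) (hconst 1) (hconst 2) hrel ?_ _
    (fun M => algebraMap k F (c M)) ?_ ?_ hW0 ?_ hsum
  · rintro ⟨h0, h1, h2⟩
    apply hnonc
    clear_value gen dg
    fin_cases g0
    · exact h0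
    · exact h1
    · exact h2
  · intro M hM
    have := Finsupp.mem_support_iff.mp (Finset.mem_filter.mp hM).1
    simpa using this
  · exact ⟨M1, Finset.mem_filter.mpr ⟨hM1, hM1W⟩⟩
  · intro M hM
    exact (Finset.mem_filter.mp hM).2

end Q2Aux

namespace Q2Aux

lemma exp_lemma' {k : Type*} [Field k] {m : ℕ} (hm : 3 ≤ m)
    (ψ : Q2Ring k →ₐ[k] Polynomial (Q2Ring k)) (hψ : ∀ a, (ψ a).coeff 0 = a)
    (hnt : ¬ ((ψ (q2X k)).natDegree = 0 ∧ (ψ (q2Y k)).natDegree = 0 ∧ (ψ (q2Z k)).natDegree = 0))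
    (c : Idx →₀ k)
    (hG : ψ (∑ M ∈ c.support, c M • mon k M) = Polynomial.C (∑ M ∈ c.support, c M • mon k M))
    {W : ℕ} (hW0 : W ≠ 0) (hW : ∀ M ∈ c.support, wt m M ≤ W)
    (hex : ∃ M ∈ c.support, wt m M = W) :
    ∃ M0, c.support.filter (fun M => wt m M = W) = {M0} ∧ (M0.2.2 : ℕ) = 0 ∧
      (M0.1 = 0 ∨ M0.2.1 = 0) := by
  obtain ⟨d, hd⟩ := exists_der (AlgebraicClosure k)
  refine exp_lemma (F := AlgebraicClosure k) d ?_ hd ?_ hm ψ hψ hnt c hG hW0 hW hex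
  · simp
  · have h1 : Transcendental (AlgebraicClosure k)
        (algebraMap (Polynomial (AlgebraicClosure k))
          (FractionRing (Polynomial (AlgebraicClosure k))) Polynomial.X) := by
      rw [transcendental_algebraMap_iff (IsFractionRing.injective _ _)]
      exact Polynomial.transcendental_X _
    exact h1.restrictScalars (algebraMap k (AlgebraicClosure k)).injective

/-- a degree bound for elements `z` with `z (z + 1) = x y` -/
lemma z_wt {k : Type*} [Field k] {m : ℕ} {x y : Q2Ring k} (c cx cy : Idx →₀ k)
    (hx : x = ∑ M ∈ cx.support, cx M • mon k M) (hy : y = ∑ M ∈ cy.support, cy M • mon k M)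
    (hcx : ∀ M ∈ cx.support, wt m M ≤ m + 2) (hcy : ∀ M ∈ cy.support, wt m M ≤ m)
    (hz : x * y = (∑ M ∈ c.support, c M • mon k M) * ((∑ M ∈ c.support, c M • mon k M) + 1)) :
    ∀ M ∈ c.support, wt m M ≤ m + 1 := by
  intro M hM
  have htr : Transcendental k (algebraMap (Polynomial k) (FractionRing (Polynomial k))
      Polynomial.X) := by
    rw [transcendental_algebraMap_iff (IsFractionRing.injective _ _)]
    exact Polynomial.transcendental_X _
  set w := algebraMap (Polynomial k) (FractionRing (Polynomial k)) Polynomial.X with hw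
  refine (wt_le_of_natDegree htr c M hM).trans ?_
  have h1 := congrArg (Th k m w) hz
  rw [map_mul, map_mul, map_add, map_one] at h1
  have h2 : (Th k m w x).natDegree ≤ m + 2 := by
    rw [hx]; exact natDegree_sum_le (fun M => (Th_mon m _ M).1) cx hcx
  have h3 : (Th k m w y).natDegree ≤ m := by
    rw [hy]; exact natDegree_sum_le (fun M => (Th_mon m _ M).1) cy hcy
  have h4 := Polynomial.natDegree_mul_le_of_le h2 h3
  rw [h1] at h4
  generalize (Th k m w) (∑ M ∈ c.support, c M • mon k M) = P at h4 ⊢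
  by_contra! hcon
  have h5 : (P + 1).natDegree = P.natDegree := by
    have := Polynomial.natDegree_add_C (p := P) (a := 1)
    simpa using this
  have h6 : P ≠ 0 := by rintro rfl; simp at hcon
  have h7 : P + 1 ≠ 0 := by
    intro h; rw [h] at h5; simp at h5; omega
  rw [Polynomial.natDegree_mul h6 h7, h5] at h4
  omega

lemma auto_form {k : Type*} [Field k] {m : ℕ} (hm : 3 ≤ m) (α : Q2Ring k ≃ₐ[k] Q2Ring k)
    (φ : Q2Ring k →ₐ[k] Polynomial (Q2Ring k)) (hφ : ∀ a, (φ a).coeff 0 = a)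
    (hnt : ∃ b, φ b ≠ Polynomial.C b) (g : Q2Ring k) (hg : φ g = Polynomial.C g)
    (hgc : ∀ b, g ≠ algebraMap k (Q2Ring k) b) :
    ∃ (c : Idx →₀ k) (M0 : Idx), α g = ∑ M ∈ c.support, c M • mon k M ∧ M0 ∈ c.support ∧
      (∀ M ∈ c.support, M ≠ M0 → wt m M < wt m M0) ∧ (M0.2.2 : ℕ) = 0 ∧
      (M0.1 = 0 ∨ M0.2.1 = 0) ∧ wt m M0 ≠ 0 := by
  obtain ⟨c, hc⟩ := exists_rep (α g)
  let ψ : Q2Ring k →ₐ[k] Polynomial (Q2Ring k) :=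
    (Polynomial.mapAlgHom (α : Q2Ring k →ₐ[k] Q2Ring k)).comp
      (φ.comp (α.symm : Q2Ring k →ₐ[k] Q2Ring k))
  have hψ : ∀ a, ψ a = (φ (α.symm a)).map (α : Q2Ring k →+* Q2Ring k) := fun a => rfl
  have hψ0 : ∀ a, (ψ a).coeff 0 = a := by
    intro a
    rw [hψ, Polynomial.coeff_map, hφ]
    exact α.apply_symm_apply a
  have hψg : ψ (α g) = Polynomial.C (α g) := by
    rw [hψ, α.symm_apply_apply, hg, Polynomial.map_C]; rfl
  have hψnt : ¬ ((ψ (q2X k)).natDegree = 0 ∧ (ψ (q2Y k)).natDegree = 0 ∧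
      (ψ (q2Z k)).natDegree = 0) := by
    rintro ⟨h1, h2, h3⟩
    have e : ψ = (Polynomial.CAlgHom : Q2Ring k →ₐ[k] Polynomial (Q2Ring k)) := by
      refine q2_ext (k := k) (B := Polynomial (Q2Ring k)) ?_ ?_ ?_
      · rw [Polynomial.eq_C_of_natDegree_eq_zero h1, hψ0]; rfl
      · rw [Polynomial.eq_C_of_natDegree_eq_zero h2, hψ0]; rfl
      · rw [Polynomial.eq_C_of_natDegree_eq_zero h3, hψ0]; rfl
    obtain ⟨b, hb⟩ := hnt
    apply hb
    have h4 : ψ (α b) = Polynomial.C (α b) := by rw [e]; rfl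
    rw [hψ, α.symm_apply_apply] at h4
    apply Polynomial.map_injective (α : Q2Ring k →+* Q2Ring k) α.injective
    rw [h4, Polynomial.map_C]; rfl
  have hgne : ∀ b, α g ≠ algebraMap k (Q2Ring k) b := by
    intro b hb
    apply hgc b
    rw [← α.symm_apply_apply g, hb]
    exact α.symm.commutes b
  have hex : ∃ M ∈ c.support, M ≠ (0, 0, 0) := by
    by_contra! hcon
    apply hgne (c (0, 0, 0))
    have e0 : algebraMap k (Q2Ring k) (c (0, 0, 0)) = c (0, 0, 0) • mon k (0, 0, 0) := by
      have e := Algebra.smul_def (c (0, 0, 0)) (mon k (0, 0, 0))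
      rw [e]
      simp [mon]
    rw [hc, e0]
    apply Finset.sum_eq_single
    · intro M hM hne
      exact absurd (hcon M hM) hne
    · intro h
      rw [Finsupp.notMem_support_iff.mp h, zero_smul]
  obtain ⟨M1, hM1, hM1ne⟩ := hex
  obtain ⟨N, hN, hmax⟩ := c.support.exists_max_image (wt m) ⟨M1, hM1⟩
  have hNpos : wt m N ≠ 0 := by
    intro h
    have h2 := hmax M1 hM1
    rw [h] at h2
    apply hM1ne
    obtain ⟨i, j, e⟩ := M1
    have : i = 0 ∧ j = 0 ∧ (e : ℕ) = 0 := by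
      simp only [wt, nonpos_iff_eq_zero, Nat.add_eq_zero_iff, mul_eq_zero] at h2
      omega
    rw [Prod.mk.injEq, Prod.mk.injEq]
    exact ⟨this.1, this.2.1, Fin.ext this.2.2⟩
  rw [hc] at hψg
  obtain ⟨M0, h1, h2, h3⟩ := exp_lemma' hm ψ hψ0 hψnt c hψg hNpos hmax ⟨N, hN, rfl⟩
  have hM0 : M0 ∈ c.support ∧ wt m M0 = wt m N := by
    have : M0 ∈ c.support.filter (fun M => wt m M = wt m N) := by rw [h1]; simp
    exact Finset.mem_filter.mp this
  refine ⟨c, M0, hc, hM0.1, ?_, h2, h3, by rw [hM0.2]; exact hNpos⟩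
  intro M hM hne
  rw [hM0.2]
  apply lt_of_le_of_ne (hmax M hM)
  intro he
  apply hne
  have : M ∈ c.support.filter (fun M => wt m M = wt m N) := Finset.mem_filter.mpr ⟨hM, he⟩
  rw [h1] at this
  simpa using this

section
variable (k : Type*) [Field k]

/-- the exponential map fixing `y` -/
def phiY : Q2Ring k →ₐ[k] Polynomial (Q2Ring k) :=
  q2Lift (Polynomial.C (q2X k) + Polynomial.X * (2 * Polynomial.C (q2Z k) + 1)
      + Polynomial.X ^ 2 * Polynomial.C (q2Y k))
    (Polynomial.C (q2Y k)) (Polynomial.C (q2Z k) + Polynomial.X * Polynomial.C (q2Y k)) (by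
      have := congrArg Polynomial.C (q2_rel (k := k))
      rw [map_mul, map_mul, map_add, map_one] at this
      linear_combination this)

/-- the exponential map fixing `x` -/
def phiX : Q2Ring k →ₐ[k] Polynomial (Q2Ring k) :=
  q2Lift (Polynomial.C (q2X k)) (Polynomial.C (q2Y k) + Polynomial.X * (2 * Polynomial.C (q2Z k) + 1)
      + Polynomial.X ^ 2 * Polynomial.C (q2X k))
    (Polynomial.C (q2Z k) + Polynomial.X * Polynomial.C (q2X k)) (by
      have := congrArg Polynomial.C (q2_rel (k := k))
      rw [map_mul, map_mul, map_add, map_one] at this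
      linear_combination this)

variable {k}

lemma coeff_zero_of_gens (φ : Q2Ring k →ₐ[k] Polynomial (Q2Ring k))
    (hX : (φ (q2X k)).coeff 0 = q2X k) (hY : (φ (q2Y k)).coeff 0 = q2Y k)
    (hZ : (φ (q2Z k)).coeff 0 = q2Z k) (a : Q2Ring k) : (φ a).coeff 0 = a := by
  let ev : Polynomial (Q2Ring k) →ₐ[k] Q2Ring k :=
    (Polynomial.aeval (R := Q2Ring k) (0 : Q2Ring k)).restrictScalars k
  have hev : ∀ P, ev P = P.coeff 0 := by
    intro P
    rw [Polynomial.coeff_zero_eq_aeval_zero]; rfl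
  have : ev.comp φ = AlgHom.id k _ := by
    apply q2_ext
    · rw [AlgHom.comp_apply, hev, hX]; rfl
    · rw [AlgHom.comp_apply, hev, hY]; rfl
    · rw [AlgHom.comp_apply, hev, hZ]; rfl
  have h2 := DFunLike.congr_fun this a
  rw [AlgHom.comp_apply, hev] at h2
  exact h2

lemma phiY_zero (a : Q2Ring k) : (phiY k a).coeff 0 = a := by
  apply coeff_zero_of_gens
  · rw [phiY, q2Lift_X]; simp [Polynomial.coeff_zero_eq_eval_zero]
  · rw [phiY, q2Lift_Y]; simp [Polynomial.coeff_zero_eq_eval_zero]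
  · rw [phiY, q2Lift_Z]; simp [Polynomial.coeff_zero_eq_eval_zero]

lemma phiX_zero (a : Q2Ring k) : (phiX k a).coeff 0 = a := by
  apply coeff_zero_of_gens
  · rw [phiX, q2Lift_X]; simp [Polynomial.coeff_zero_eq_eval_zero]
  · rw [phiX, q2Lift_Y]; simp [Polynomial.coeff_zero_eq_eval_zero]
  · rw [phiX, q2Lift_Z]; simp [Polynomial.coeff_zero_eq_eval_zero]

lemma phiY_nt (h : q2Y k ≠ 0) : ∃ b, phiY k b ≠ Polynomial.C b := by
  refine ⟨q2Z k, ?_⟩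
  rw [phiY, q2Lift_Z]
  intro h1
  have h2 := congrArg (fun P => Polynomial.coeff P 1) h1
  simp [Polynomial.coeff_C] at h2
  exact h h2

lemma phiX_nt (h : q2X k ≠ 0) : ∃ b, phiX k b ≠ Polynomial.C b := by
  refine ⟨q2Z k, ?_⟩
  rw [phiX, q2Lift_Z]
  intro h1
  have h2 := congrArg (fun P => Polynomial.coeff P 1) h1
  simp [Polynomial.coeff_C] at h2
  exact h h2

lemma phiY_Y : phiY k (q2Y k) = Polynomial.C (q2Y k) := by rw [phiY, q2Lift_Y]
lemma phiX_X : phiX k (q2X k) = Polynomial.C (q2X k) := by rw [phiX, q2Lift_X]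

lemma natDegree_aut (β : Polynomial k ≃ₐ[k] Polynomial k) :
    (β Polynomial.X).natDegree = 1 ∧ ∀ f, β f = f.comp (β Polynomial.X) := by
  have h : ∀ f, β f = f.comp (β Polynomial.X) := by
    intro f
    have := Polynomial.aeval_algHom_apply (β : Polynomial k →ₐ[k] Polynomial k) Polynomial.X f
    rw [Polynomial.aeval_X_left_apply] at this
    rw [Polynomial.comp, ← Polynomial.algebraMap_eq]
    exact this.symm
  refine ⟨?_, h⟩
  have h1 := h (β.symm Polynomial.X)
  rw [β.apply_symm_apply] at h1
  have h2 := congrArg Polynomial.natDegree h1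
  rw [Polynomial.natDegree_comp, Polynomial.natDegree_X] at h2
  exact Nat.eq_one_of_mul_eq_one_left h2.symm

lemma nu_mon {p : Polynomial k} {ν : Q2Ring k →ₐ[k] Polynomial k}
    (hX : ν (q2X k) = Polynomial.X * (1 + Polynomial.X * p)) (hY : ν (q2Y k) = p)
    (hZ : ν (q2Z k) = Polynomial.X * p) (M : Idx) :
    (ν (mon k M)).natDegree ≤ wt p.natDegree M ∧
    (ν (mon k M)).coeff (wt p.natDegree M) = p.leadingCoeff ^ M.1 * p.leadingCoeff ^ M.2.1 *
      p.leadingCoeff ^ (M.2.2 : ℕ) := by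
  rw [mon, map_mul, map_mul, map_pow, map_pow, map_pow, hX, hY, hZ]
  have h1 : (Polynomial.X * p).natDegree ≤ p.natDegree + 1 := by
    rw [add_comm]
    exact Polynomial.natDegree_mul_le_of_le Polynomial.natDegree_X_le le_rfl
  apply mon_deg
  · have h2 : (1 + Polynomial.X * p).natDegree ≤ p.natDegree + 1 :=
      Polynomial.natDegree_add_le_of_degree_le (by simp) h1
    have := Polynomial.natDegree_mul_le_of_le (Polynomial.natDegree_X_le (R := k)) h2
    omega
  · exact le_rfl
  · exact h1
  · rw [show p.natDegree + 2 = p.natDegree + 1 + 1 from rfl, Polynomial.coeff_X_mul,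
      Polynomial.coeff_add, Polynomial.coeff_X_mul, Polynomial.coeff_one, if_neg (by omega),
      zero_add, Polynomial.coeff_natDegree]
  · rfl
  · rw [Polynomial.coeff_X_mul, Polynomial.coeff_natDegree]

lemma nu_deg {p : Polynomial k} (hp : p ≠ 0) {ν : Q2Ring k →ₐ[k] Polynomial k}
    (hX : ν (q2X k) = Polynomial.X * (1 + Polynomial.X * p)) (hY : ν (q2Y k) = p)
    (hZ : ν (q2Z k) = Polynomial.X * p) (c : Idx →₀ k) (M0 : Idx) (hM0 : M0 ∈ c.support)
    (h : ∀ M ∈ c.support, M ≠ M0 → wt p.natDegree M < wt p.natDegree M0) :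
    (ν (∑ M ∈ c.support, c M • mon k M)).natDegree = wt p.natDegree M0 := by
  have hle : ∀ M ∈ c.support, wt p.natDegree M ≤ wt p.natDegree M0 := by
    intro M hM
    by_cases hM' : M = M0
    · rw [hM']
    · exact (h M hM hM').le
  apply le_antisymm
  · exact natDegree_sum_le (fun M => (nu_mon hX hY hZ M).1) c hle
  · apply Polynomial.le_natDegree_of_ne_zero
    rw [coeff_sum_top (fun M => (nu_mon hX hY hZ M).1) c hle]
    have : c.support.filter (fun M => wt p.natDegree M = wt p.natDegree M0) = {M0} := by
      ext M
      rw [Finset.mem_filter, Finset.mem_singleton]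
      constructor
      · rintro ⟨h1, h2⟩
        by_contra h3
        have := h M h1 h3
        omega
      · rintro rfl; exact ⟨hM0, rfl⟩
    rw [this, Finset.sum_singleton, (nu_mon hX hY hZ M0).2]
    have hl : p.leadingCoeff ≠ 0 := Polynomial.leadingCoeff_ne_zero.mpr hp
    rw [smul_eq_mul]
    have := Finsupp.mem_support_iff.mp hM0
    positivity

lemma not_const_Y {p : Polynomial k} (hp : 3 ≤ p.natDegree) {ν : Q2Ring k →ₐ[k] Polynomial k}
    (hY : ν (q2Y k) = p) (b : k) : q2Y k ≠ algebraMap k (Q2Ring k) b := by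
  intro h
  rw [h, AlgHom.commutes] at hY
  rw [← hY, Polynomial.algebraMap_apply, Polynomial.natDegree_C] at hp
  omega

lemma natDegree_nuX {p : Polynomial k} (hp : 3 ≤ p.natDegree) :
    (Polynomial.X * (1 + Polynomial.X * p)).natDegree = p.natDegree + 2 := by
  have h0 : p ≠ 0 := by rintro rfl; simp at hp
  have h1 : (Polynomial.X * p).natDegree = p.natDegree + 1 := Polynomial.natDegree_X_mul h0
  have h2 : (1 + Polynomial.X * p).natDegree = p.natDegree + 1 := by
    rw [Polynomial.natDegree_add_eq_right_of_natDegree_lt, h1]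
    rw [h1]; simp
  have h3 : 1 + Polynomial.X * p ≠ 0 := by
    intro h; rw [h] at h2; simp at h2
  rw [Polynomial.natDegree_X_mul h3, h2]

lemma not_const_X {p : Polynomial k} (hp : 3 ≤ p.natDegree) {ν : Q2Ring k →ₐ[k] Polynomial k}
    (hX : ν (q2X k) = Polynomial.X * (1 + Polynomial.X * p)) (b : k) :
    q2X k ≠ algebraMap k (Q2Ring k) b := by
  intro h
  rw [h, AlgHom.commutes] at hX
  have := natDegree_nuX hp
  rw [← hX, Polynomial.algebraMap_apply, Polynomial.natDegree_C] at this
  omega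

/-- the shape of the image of `y` -/
lemma y_form {p q : Polynomial k} (hp : 3 ≤ p.natDegree) (hq : 3 ≤ q.natDegree)
    {νp νq : Q2Ring k →ₐ[k] Polynomial k}
    (hνpX : νp (q2X k) = Polynomial.X * (1 + Polynomial.X * p)) (hνpY : νp (q2Y k) = p)
    (hνpZ : νp (q2Z k) = Polynomial.X * p) (hνqY : νq (q2Y k) = q)
    (α : Q2Ring k ≃ₐ[k] Q2Ring k) (β : Polynomial k ≃ₐ[k] Polynomial k)
    (hcomm : ∀ a, νp (α a) = β (νq a)) :
    ∃ (c : Idx →₀ k) (M0 : Idx), α (q2Y k) = ∑ M ∈ c.support, c M • mon k M ∧ M0 ∈ c.support ∧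
      (∀ M ∈ c.support, M ≠ M0 → wt p.natDegree M < wt p.natDegree M0) ∧ (M0.2.2 : ℕ) = 0 ∧
      (M0.1 = 0 ∨ M0.2.1 = 0) ∧ wt p.natDegree M0 ≠ 0 ∧ wt p.natDegree M0 = q.natDegree := by
  have h0 : p ≠ 0 := by rintro rfl; simp at hp
  have hYc := not_const_Y hp hνpY
  have hY0 : q2Y k ≠ 0 := by have := hYc 0; rwa [map_zero] at this
  obtain ⟨c, M0, h1, h2, h3, h4, h5, h6⟩ := auto_form hp α (phiY k) phiY_zero (phiY_nt hY0) _
    phiY_Y hYc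
  refine ⟨c, M0, h1, h2, h3, h4, h5, h6, ?_⟩
  have := nu_deg h0 hνpX hνpY hνpZ c M0 h2 h3
  rw [← this, ← h1, hcomm, hνqY, (natDegree_aut β).2, Polynomial.natDegree_comp,
    (natDegree_aut β).1, mul_one]

lemma x_form {p q : Polynomial k} (hp : 3 ≤ p.natDegree) (hq : 3 ≤ q.natDegree)
    {νp νq : Q2Ring k →ₐ[k] Polynomial k}
    (hνpX : νp (q2X k) = Polynomial.X * (1 + Polynomial.X * p)) (hνpY : νp (q2Y k) = p)
    (hνpZ : νp (q2Z k) = Polynomial.X * p)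
    (hνqX : νq (q2X k) = Polynomial.X * (1 + Polynomial.X * q))
    (α : Q2Ring k ≃ₐ[k] Q2Ring k) (β : Polynomial k ≃ₐ[k] Polynomial k)
    (hcomm : ∀ a, νp (α a) = β (νq a)) :
    ∃ (c : Idx →₀ k), α (q2X k) = ∑ M ∈ c.support, c M • mon k M ∧
      (∀ M ∈ c.support, wt p.natDegree M ≤ q.natDegree + 2) := by
  have h0 : p ≠ 0 := by rintro rfl; simp at hp
  have hXc := not_const_X hp hνpX
  have hX0 : q2X k ≠ 0 := by have := hXc 0; rwa [map_zero] at this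
  obtain ⟨c, M0, h1, h2, h3, h4, h5, h6⟩ := auto_form hp α (phiX k) phiX_zero (phiX_nt hX0) _
    phiX_X hXc
  refine ⟨c, h1, ?_⟩
  have := nu_deg h0 hνpX hνpY hνpZ c M0 h2 h3
  rw [← h1, hcomm, hνqX, (natDegree_aut β).2, Polynomial.natDegree_comp,
    (natDegree_aut β).1, mul_one, natDegree_nuX hq] at this
  rw [this]
  intro M hM
  by_cases hM' : M = M0
  · rw [hM']
  · exact (h3 M hM hM').le

lemma deg_le {p q : Polynomial k} (hp : 3 ≤ p.natDegree) (hq : 3 ≤ q.natDegree)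
    {νp νq : Q2Ring k →ₐ[k] Polynomial k}
    (hνpX : νp (q2X k) = Polynomial.X * (1 + Polynomial.X * p)) (hνpY : νp (q2Y k) = p)
    (hνpZ : νp (q2Z k) = Polynomial.X * p) (hνqY : νq (q2Y k) = q)
    (α : Q2Ring k ≃ₐ[k] Q2Ring k) (β : Polynomial k ≃ₐ[k] Polynomial k)
    (hcomm : ∀ a, νp (α a) = β (νq a)) : p.natDegree ≤ q.natDegree := by
  obtain ⟨c, M0, h1, h2, h3, h4, h5, h6, h7⟩ := y_form hp hq hνpX hνpY hνpZ hνqY α β hcomm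
  rw [← h7]
  rw [wt, h4] at h6 ⊢
  by_cases hi : M0.1 = 0
  · have : M0.2.1 ≠ 0 := by rintro hj; rw [hi, hj] at h6; simp at h6
    have : 1 ≤ M0.2.1 := by omega
    nlinarith
  · have : 1 ≤ M0.1 := by omega
    nlinarith

lemma low_form {m : ℕ} (hm : 3 ≤ m) (c : Idx →₀ k) (h : ∀ M ∈ c.support, wt m M ≤ m + 2) :
    ∑ M ∈ c.support, c M • mon k M = algebraMap k _ (c (1, 0, 0)) * q2X k
      + algebraMap k _ (c (0, 1, 0)) * q2Y k + algebraMap k _ (c (0, 0, 1)) * q2Z k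
      + algebraMap k _ (c (0, 0, 0)) := by
  have hsub : c.support ⊆ ({(1, 0, 0), (0, 1, 0), (0, 0, 1), (0, 0, 0)} : Finset Idx) := by
    rintro ⟨i, j, e⟩ hM
    have h1 := h _ hM
    simp only [wt] at h1
    have hi : i ≤ 1 := by by_contra! hcon; nlinarith
    have hj : j ≤ 1 := by by_contra! hcon; nlinarith
    have hs : i + j + (e : ℕ) ≤ 1 := by
      by_contra! hcon
      have : m * (i + j + (e : ℕ)) + (2 * i + e) = (m + 2) * i + m * j + (m + 1) * e := by ring
      nlinarith
    fin_cases e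
    · interval_cases i <;> interval_cases j <;> simp_all
    · interval_cases i <;> interval_cases j <;> simp_all
  have e1 : ∀ (b : k) (M : Idx), b • mon k M = algebraMap k (Q2Ring k) b * mon k M :=
    fun b M => Algebra.smul_def b (mon k M)
  rw [Finset.sum_subset hsub]
  · rw [Finset.sum_insert, Finset.sum_insert, Finset.sum_insert, Finset.sum_singleton,
      e1, e1, e1, e1]
    · simp [mon]; ring
    · simp
    · simp
    · simp
  · intro M _ hM
    rw [Finsupp.notMem_support_iff.mp hM, zero_smul]

lemma sep {p : Polynomial k} (hp : 3 ≤ p.natDegree) {a0 a1 a2 b0 b1 b2 : k}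
    (h : (Polynomial.C a0 + Polynomial.C a1 * Polynomial.X + Polynomial.C a2 * Polynomial.X ^ 2)
      + (Polynomial.C b0 + Polynomial.C b1 * Polynomial.X + Polynomial.C b2 * Polynomial.X ^ 2) * p
      = 0) : (a0 = 0 ∧ a1 = 0 ∧ a2 = 0) ∧ (b0 = 0 ∧ b1 = 0 ∧ b2 = 0) := by
  have key : ∀ a0 a1 a2 : k, Polynomial.C a0 + Polynomial.C a1 * Polynomial.X
      + Polynomial.C a2 * Polynomial.X ^ 2 = 0 → a0 = 0 ∧ a1 = 0 ∧ a2 = 0 := by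
    intro a0 a1 a2 h
    have h0 := congrArg (fun P => Polynomial.coeff P 0) h
    have h1 := congrArg (fun P => Polynomial.coeff P 1) h
    have h2 := congrArg (fun P => Polynomial.coeff P 2) h
    simp [Polynomial.coeff_C, Polynomial.coeff_X, Polynomial.coeff_X_pow] at h0 h1 h2
    exact ⟨h0, h1, h2⟩
  have hb : Polynomial.C b0 + Polynomial.C b1 * Polynomial.X
      + Polynomial.C b2 * Polynomial.X ^ 2 = 0 := by
    by_contra hne
    have hp0 : p ≠ 0 := by rintro rfl; simp at hp
    have h1 := Polynomial.natDegree_mul hne hp0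
    rw [add_comm, add_eq_zero_iff_eq_neg] at h
    rw [h, Polynomial.natDegree_neg] at h1
    have h2 : (Polynomial.C a0 + Polynomial.C a1 * Polynomial.X
      + Polynomial.C a2 * Polynomial.X ^ 2).natDegree ≤ 2 := by compute_degree
    omega
  rw [hb, zero_mul, add_zero] at h
  exact ⟨key _ _ _ h, key _ _ _ hb⟩

end
end Q2Aux

open Q2Aux

/-- **Lemma 2.2(2) (Blanc–van Santen).** If `p, q ∈ k[t]` have degree `≥ 3` and
`ν_p ∘ α = β ∘ ν_q` for `k`-algebra automorphisms `α` of `A` and `β` of `k[t]`, then there are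
`μ ∈ k` and `λ ∈ k*` with `p(t) = λ·q(λt+μ)`, `β(t) = λt+μ`, and
`α : X ↦ λX + (μ²/λ)Y + 2μZ + μ`, `Y ↦ (1/λ)Y`, `Z ↦ Z + (μ/λ)Y`. -/
theorem automorphisms_relating_nu_p_nu_q (k : Type*) [Field k]
    (p q : Polynomial k) (hp : 3 ≤ p.natDegree) (hq : 3 ≤ q.natDegree)
    (νp νq : Q2Ring k →ₐ[k] Polynomial k)
    (hνpX : νp (q2X k) = Polynomial.X * (1 + Polynomial.X * p))
    (hνpY : νp (q2Y k) = p)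
    (hνpZ : νp (q2Z k) = Polynomial.X * p)
    (hνqX : νq (q2X k) = Polynomial.X * (1 + Polynomial.X * q))
    (hνqY : νq (q2Y k) = q)
    (hνqZ : νq (q2Z k) = Polynomial.X * q)
    (hνpsurj : Function.Surjective νp) (hνqsurj : Function.Surjective νq)
    (α : Q2Ring k ≃ₐ[k] Q2Ring k) (β : Polynomial k ≃ₐ[k] Polynomial k)
    (hcomm : νp.comp α.toAlgHom = β.toAlgHom.comp νq) :
    ∃ μ lam : k, lam ≠ 0 ∧
      p = Polynomial.C lam * q.comp (Polynomial.C lam * Polynomial.X + Polynomial.C μ) ∧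
      β Polynomial.X = Polynomial.C lam * Polynomial.X + Polynomial.C μ ∧
      α (q2X k) = algebraMap k (Q2Ring k) lam * q2X k
          + algebraMap k (Q2Ring k) (μ ^ 2 / lam) * q2Y k
          + algebraMap k (Q2Ring k) (2 * μ) * q2Z k
          + algebraMap k (Q2Ring k) μ ∧
      α (q2Y k) = algebraMap k (Q2Ring k) lam⁻¹ * q2Y k ∧
      α (q2Z k) = q2Z k + algebraMap k (Q2Ring k) (μ / lam) * q2Y k := by
  have hc : ∀ a, νp (α a) = β (νq a) := fun a => DFunLike.congr_fun hcomm a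
  have hc' : ∀ a, νq (α.symm a) = β.symm (νp a) := by
    intro a
    have := hc (α.symm a)
    rw [α.apply_symm_apply] at this
    rw [this, β.symm_apply_apply]
  have hd : p.natDegree = q.natDegree :=
    le_antisymm (deg_le hp hq hνpX hνpY hνpZ hνqY α β hc)
      (deg_le hq hp hνqX hνqY hνqZ hνpY α.symm β.symm hc')
  obtain ⟨cy, M0, hy1, hy2, hy3, hy4, hy5, hy6, hy7⟩ := y_form hp hq hνpX hνpY hνpZ hνqY α β hc
  obtain ⟨cx, hx1, hx2⟩ := x_form hp hq hνpX hνpY hνpZ hνqX α β hc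
  rw [← hd] at hx2 hy7
  have hcy : ∀ M ∈ cy.support, wt p.natDegree M ≤ p.natDegree := by
    intro M hM
    by_cases hM' : M = M0
    · rw [hM', hy7]
    · exact (hy3 M hM hM').le.trans hy7.le
  obtain ⟨cz, hz1⟩ := exists_rep (α (q2Z k))
  have hrel := congrArg α (q2_rel (k := k))
  rw [map_mul, map_mul, map_add, map_one] at hrel
  have hcz := z_wt (m := p.natDegree) cz cx cy hx1 hy1 hx2 hcy (by rw [← hz1]; exact hrel)
  rw [low_form hp cx hx2] at hx1
  rw [low_form hp cy (fun M hM => (hcy M hM).trans (by omega))] at hy1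
  rw [low_form hp cz (fun M hM => (hcz M hM).trans (by omega))] at hz1
  have ha1 : cy (1, 0, 0) = 0 := by
    by_contra h
    have := hcy _ (Finsupp.mem_support_iff.mpr h)
    simp [wt] at this
  have ha3 : cy (0, 0, 1) = 0 := by
    by_contra h
    have := hcy _ (Finsupp.mem_support_iff.mpr h)
    simp [wt] at this
  rw [ha1, ha3] at hy1
  generalize cy (0, 1, 0) = a2 at hy1
  generalize cy (0, 0, 0) = a4 at hy1
  generalize cx (1, 0, 0) = d1 at hx1
  generalize cx (0, 1, 0) = d2 at hx1
  generalize cx (0, 0, 1) = d3 at hx1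
  generalize cx (0, 0, 0) = d4 at hx1
  generalize cz (1, 0, 0) = b1 at hz1
  generalize cz (0, 1, 0) = b2 at hz1
  generalize cz (0, 0, 1) = b3 at hz1
  generalize cz (0, 0, 0) = b4 at hz1
  obtain ⟨hβ1, hβ⟩ := natDegree_aut β
  obtain ⟨lam, μ, hβX⟩ := Polynomial.exists_eq_X_add_C_of_natDegree_le_one hβ1.le
  have hlam : lam ≠ 0 := by
    rintro rfl
    rw [hβX] at hβ1
    simp at hβ1
  have EY := congrArg νp hy1
  have EX := congrArg νp hx1
  have EZ := congrArg νp hz1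
  rw [hc, hνqY, hβ q] at EY
  rw [hc, hνqZ, map_mul, hβ q] at EZ
  rw [hc, hνqX, map_mul, map_add, map_one, map_mul, hβ q] at EX
  simp only [map_add, map_mul, AlgHom.commutes, hνpX, hνpY, hνpZ, Polynomial.algebraMap_eq,
    map_zero, zero_mul, zero_add, add_zero] at EX EY EZ
  rw [hβX] at EX EY EZ
  set Q := q.comp (Polynomial.C lam * Polynomial.X + Polynomial.C μ) with hQ
  rw [EY] at EX EZ
  have S1 := sep hp (a0 := μ * a4 - b4) (a1 := lam * a4 - b1) (a2 := 0) (b0 := μ * a2 - b2)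
    (b1 := lam * a2 - b3) (b2 := -b1) (by
      simp only [map_sub, map_mul, map_neg, map_zero]
      linear_combination EZ)
  obtain ⟨⟨s1, s2, -⟩, s3, s4, s5⟩ := S1
  have hb1 : b1 = 0 := by simpa using s5
  have ha4 : a4 = 0 := by
    rw [hb1, sub_zero] at s2
    exact (mul_eq_zero.mp s2).resolve_left hlam
  subst ha4
  have hb4 : b4 = 0 := by simpa using s1
  have S2 := sep hp (a0 := μ - d4) (a1 := lam - d1) (a2 := 0) (b0 := μ ^ 2 * a2 - d2)
    (b1 := 2 * lam * μ * a2 - d3) (b2 := lam ^ 2 * a2 - d1) (by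
      simp only [map_zero, add_zero] at EX
      simp only [map_sub, map_mul, map_neg, map_zero, map_pow, map_ofNat]
      linear_combination EX)
  obtain ⟨⟨t1, t2, -⟩, t3, t4, t5⟩ := S2
  have hd1 : d1 = lam := (sub_eq_zero.mp t2).symm
  have hd4 : d4 = μ := (sub_eq_zero.mp t1).symm
  have ha2 : a2 = lam⁻¹ := by
    rw [hd1] at t5
    field_simp
    apply mul_left_cancel₀ hlam
    linear_combination t5
  have hb3 : b3 = 1 := by rw [← sub_eq_zero.mp s4, ha2, mul_inv_cancel₀ hlam]
  have hb2 : b2 = μ / lam := by rw [← sub_eq_zero.mp s3, ha2, div_eq_mul_inv]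
  have hd3 : d3 = 2 * μ := by rw [← sub_eq_zero.mp t4, ha2]; field_simp
  have hd2 : d2 = μ ^ 2 / lam := by rw [← sub_eq_zero.mp t3, ha2, div_eq_mul_inv]
  refine ⟨μ, lam, hlam, ?_, hβX, ?_, ?_, ?_⟩
  · rw [← hQ, EY, ha2, map_zero, add_zero, ← mul_assoc, ← Polynomial.C_mul, mul_inv_cancel₀ hlam,
      map_one, one_mul]
  · rw [hx1, hd1, hd2, hd3, hd4]
  · rw [hy1, ha2, map_zero]; ring
  · rw [hz1, hb1, hb2, hb3, hb4, map_zero, map_one]; ring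
end
end
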